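/- Let K be a field, A = K[x_1, ..., x_n], and F ∈ A^{l×l} with det(F) = p^t, where p ∈ K[x_1] is an irreducible polynomial and t is a positive integer. Assume the Smith form of F is diag(p^{s_1}, ..., p^{s_l}) with s_1 ≤ ... ≤ s_l. Then F is equivalent to its Smith form diag(p^{s_1}, ..., p^{s_l}) if and only if J_i(F) = A for all i = 1, ..., l. -/

import Mathlib

/-- Two `l × m` matrices over a commutative ring are equivalent if they differ by
left/right multiplication by square matrices with unit determinant. -/
def MatrixEquiv {B : Type*} [CommRing B] {l m : ℕ}
    (F G : Matrix (Fin l) (Fin m) B) : Prop :=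
  ∃ (U : Matrix (Fin l) (Fin l) B) (V : Matrix (Fin m) (Fin m) B),
    IsUnit U.det ∧ IsUnit V.det ∧ F = U * G * V

/-- The set of all `i × i` minors of a matrix. -/
def minorsSet {R : Type*} [CommRing R] {l m : ℕ} (i : ℕ)
    (F : Matrix (Fin l) (Fin m) R) : Set R :=
  {a | ∃ (f : Fin i → Fin l) (g : Fin i → Fin m),
      StrictMono f ∧ StrictMono g ∧ a = (F.submatrix f g).det}

/-- `d` is a greatest common divisor of the set `s`. -/
def IsGcdOf {R : Type*} [CommRing R] (d : R) (s : Set R) : Prop :=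
  (∀ a ∈ s, d ∣ a) ∧ ∀ c : R, (∀ a ∈ s, c ∣ a) → c ∣ d

/-- `J_i(F) = A`: letting `d` be a gcd of the `i × i` minors of `F`, the `i × i`
reduced minors (the minors divided by `d`) generate the unit ideal. -/
def ReducedMinorsUnitIdeal {R : Type*} [CommRing R] {l m : ℕ} (i : ℕ)
    (F : Matrix (Fin l) (Fin m) R) : Prop :=
  ∃ d : R, IsGcdOf d (minorsSet i F) ∧
    Ideal.span {b : R | d * b ∈ minorsSet i F} = ⊤

/-- The image of a univariate polynomial `p ∈ K[x₁]` in `A = K[x₁, …, x_{n+1}]`,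
sending the variable to `x₁` (the variable of index `0`). -/
noncomputable def polyImage {K : Type*} [CommRing K] (n : ℕ) (p : Polynomial K) :
    MvPolynomial (Fin (n + 1)) K :=
  Polynomial.aeval (MvPolynomial.X 0) p

open Polynomial

namespace MatrixEquiv

variable {R S : Type*} [CommRing R] [CommRing S] {l : ℕ}

theorem refl (F : Matrix (Fin l) (Fin l) R) : MatrixEquiv F F :=
  ⟨1, 1, by simp, by simp, by simp⟩

theorem trans {F G H : Matrix (Fin l) (Fin l) R} (h₁ : MatrixEquiv F G)
    (h₂ : MatrixEquiv G H) : MatrixEquiv F H := by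
  obtain ⟨U, V, hU, hV, rfl⟩ := h₁
  obtain ⟨U', V', hU', hV', rfl⟩ := h₂
  exact ⟨U * U', V' * V, by simpa using hU.mul hU', by simpa using hV'.mul hV,
    by simp only [Matrix.mul_assoc]⟩

theorem symm {F G : Matrix (Fin l) (Fin l) R} (h : MatrixEquiv F G) : MatrixEquiv G F := by
  obtain ⟨U, V, hU, hV, rfl⟩ := h
  refine ⟨U⁻¹, V⁻¹, by simpa using hU.ringInverse, by simpa using hV.ringInverse, ?_⟩
  rw [Matrix.mul_assoc U⁻¹, Matrix.mul_assoc, Matrix.mul_nonsing_inv _ hV, Matrix.mul_one,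
    ← Matrix.mul_assoc, Matrix.nonsing_inv_mul _ hU, Matrix.one_mul]

theorem map (θ : R →+* S) {F G : Matrix (Fin l) (Fin l) R} (h : MatrixEquiv F G) :
    MatrixEquiv (F.map θ) (G.map θ) := by
  obtain ⟨U, V, hU, hV, rfl⟩ := h
  refine ⟨U.map θ, V.map θ, ?_, ?_, by simp [Matrix.map_mul]⟩
  · simpa [RingHom.map_det] using hU.map θ
  · simpa [RingHom.map_det] using hV.map θ

theorem smul {F G : Matrix (Fin l) (Fin l) R} (c : R) (h : MatrixEquiv F G) :
    MatrixEquiv (c • F) (c • G) := by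
  obtain ⟨U, V, hU, hV, rfl⟩ := h
  exact ⟨U, V, hU, hV, by simp⟩

theorem mul_left {F U : Matrix (Fin l) (Fin l) R} (hU : IsUnit U.det) :
    MatrixEquiv (U * F) F :=
  ⟨U, 1, hU, by simp, by simp⟩

theorem mul_right {F V : Matrix (Fin l) (Fin l) R} (hV : IsUnit V.det) :
    MatrixEquiv (F * V) F :=
  ⟨1, V, by simp, hV, by simp⟩

theorem map_iff_of_ringEquiv (e : R ≃+* S) {F G : Matrix (Fin l) (Fin l) R} :
    MatrixEquiv (F.map e) (G.map e) ↔ MatrixEquiv F G := by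
  refine ⟨fun h => ?_, fun h => h.map (e : R →+* S)⟩
  have := h.map (e.symm : S →+* R)
  simpa [Matrix.map_map, Function.comp_def] using this

end MatrixEquiv

section Minors

variable {R S : Type*} [CommRing R] [CommRing S] {l m : ℕ}

theorem det_submatrix_mem_span_minorsSet {i : ℕ} (F : Matrix (Fin l) (Fin m) R)
    (f : Fin i → Fin l) (g : Fin i → Fin m) :
    (F.submatrix f g).det ∈ Ideal.span (minorsSet i F) := by
  by_cases hf : Function.Injective f
  · by_cases hg : Function.Injective g
    · have hf' : StrictMono (f ∘ Tuple.sort f) :=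
        (Tuple.monotone_sort f).strictMono_of_injective (hf.comp (Equiv.injective _))
      have hg' : StrictMono (g ∘ Tuple.sort g) :=
        (Tuple.monotone_sort g).strictMono_of_injective (hg.comp (Equiv.injective _))
      have key : (F.submatrix (f ∘ Tuple.sort f) (g ∘ Tuple.sort g)).det ∈
          Ideal.span (minorsSet i F) := Ideal.subset_span ⟨_, _, hf', hg', rfl⟩
      have h1 : F.submatrix (f ∘ Tuple.sort f) (g ∘ Tuple.sort g) =
          ((F.submatrix f g).submatrix (Tuple.sort f) id).submatrix id (Tuple.sort g) := rfl
      rw [h1, Matrix.det_permute', Matrix.det_permute] at key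
      rcases Int.units_eq_one_or (Equiv.Perm.sign (Tuple.sort f)) with h | h <;>
      rcases Int.units_eq_one_or (Equiv.Perm.sign (Tuple.sort g)) with h' | h' <;>
      simpa [h, h'] using key
    · obtain ⟨a, b, hab, hne⟩ : ∃ a b, g a = g b ∧ a ≠ b := by
        simpa [Function.Injective] using hg
      rw [Matrix.det_zero_of_column_eq hne (by simp [hab])]
      exact zero_mem _
  · obtain ⟨a, b, hab, hne⟩ : ∃ a b, f a = f b ∧ a ≠ b := by
      simpa [Function.Injective] using hf
    rw [Matrix.det_zero_of_row_eq hne (by ext; simp [hab])]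
    exact zero_mem _

theorem minorsSet_transpose (i : ℕ) (F : Matrix (Fin l) (Fin m) R) :
    minorsSet i F.transpose = minorsSet i F := by
  ext a
  constructor
  · rintro ⟨f, g, hf, hg, rfl⟩
    exact ⟨g, f, hg, hf, by rw [← Matrix.det_transpose]; rfl⟩
  · rintro ⟨f, g, hf, hg, rfl⟩
    exact ⟨g, f, hg, hf, by rw [← Matrix.det_transpose]; rfl⟩

theorem span_minorsSet_mul_left_le (i : ℕ) (U : Matrix (Fin l) (Fin l) R)
    (F : Matrix (Fin l) (Fin m) R) :
    Ideal.span (minorsSet i (U * F)) ≤ Ideal.span (minorsSet i F) := by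
  rw [Ideal.span_le]
  rintro _ ⟨f, g, -, -, rfl⟩
  have h1 : (U * F).submatrix f g =
      fun a => ∑ k, U (f a) k • (fun b => F k (g b)) := by
    ext a b
    simp [Matrix.mul_apply]
  rw [h1]
  change Matrix.detRowAlternating.toMultilinearMap _ ∈ _
  rw [MultilinearMap.map_sum]
  refine Ideal.sum_mem _ fun κ _ => ?_
  rw [MultilinearMap.map_smul_univ]
  exact Ideal.mul_mem_left _ _ (det_submatrix_mem_span_minorsSet F κ g)

theorem span_minorsSet_mul_right_le (i : ℕ) (F : Matrix (Fin l) (Fin m) R)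
    (V : Matrix (Fin m) (Fin m) R) :
    Ideal.span (minorsSet i (F * V)) ≤ Ideal.span (minorsSet i F) := by
  rw [← minorsSet_transpose, Matrix.transpose_mul, ← minorsSet_transpose i F]
  exact span_minorsSet_mul_left_le _ _ _

theorem MatrixEquiv.span_minorsSet_eq {F G : Matrix (Fin l) (Fin l) R} (h : MatrixEquiv F G)
    (i : ℕ) : Ideal.span (minorsSet i F) = Ideal.span (minorsSet i G) := by
  have key : ∀ {F G : Matrix (Fin l) (Fin l) R}, MatrixEquiv F G →
      Ideal.span (minorsSet i F) ≤ Ideal.span (minorsSet i G) := by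
    rintro F G ⟨U, V, -, -, rfl⟩
    exact (span_minorsSet_mul_right_le _ _ _).trans (span_minorsSet_mul_left_le _ _ _)
  exact le_antisymm (key h) (key h.symm)

theorem span_minorsSet_map (θ : R →+* S) (i : ℕ) (F : Matrix (Fin l) (Fin m) R) :
    Ideal.span (minorsSet i (F.map θ)) = (Ideal.span (minorsSet i F)).map θ := by
  rw [Ideal.map_span]
  congr 1
  ext a
  constructor
  · rintro ⟨f, g, hf, hg, rfl⟩
    exact ⟨_, ⟨f, g, hf, hg, rfl⟩, by rw [RingHom.map_det]; rfl⟩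
  · rintro ⟨_, ⟨f, g, hf, hg, rfl⟩, rfl⟩
    exact ⟨f, g, hf, hg, by rw [RingHom.map_det]; rfl⟩

theorem span_minorsSet_smul (c : R) (i : ℕ) (F : Matrix (Fin l) (Fin m) R) :
    Ideal.span (minorsSet i (c • F)) = Ideal.span {c ^ i} * Ideal.span (minorsSet i F) := by
  rw [Ideal.span_mul_span', Set.singleton_mul]
  congr 1
  ext a
  constructor
  · rintro ⟨f, g, hf, hg, rfl⟩
    exact ⟨_, ⟨f, g, hf, hg, rfl⟩, by simp [Matrix.submatrix_smul]⟩
  · rintro ⟨_, ⟨f, g, hf, hg, rfl⟩, rfl⟩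
    exact ⟨f, g, hf, hg, by simp [Matrix.submatrix_smul]⟩

theorem apply_mem_span_minorsSet_one (F : Matrix (Fin l) (Fin m) R) (i : Fin l) (j : Fin m) :
    F i j ∈ Ideal.span (minorsSet 1 F) := by
  simpa using det_submatrix_mem_span_minorsSet F (fun _ : Fin 1 => i) (fun _ => j)

/-- The block sum of the `1 × 1` matrix `a` and `F`. -/
def consMatrix (a : R) (F : Matrix (Fin l) (Fin l) R) : Matrix (Fin (l + 1)) (Fin (l + 1)) R :=
  Matrix.of (Fin.cons (Fin.cons a 0) fun i => Fin.cons 0 (F i))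

@[simp] theorem consMatrix_zero_zero (a : R) (F : Matrix (Fin l) (Fin l) R) :
    consMatrix a F 0 0 = a := rfl

@[simp] theorem consMatrix_zero_succ (a : R) (F : Matrix (Fin l) (Fin l) R) (j : Fin l) :
    consMatrix a F 0 j.succ = 0 := rfl

@[simp] theorem consMatrix_succ_zero (a : R) (F : Matrix (Fin l) (Fin l) R) (i : Fin l) :
    consMatrix a F i.succ 0 = 0 := rfl

@[simp] theorem consMatrix_succ_succ (a : R) (F : Matrix (Fin l) (Fin l) R) (i j : Fin l) :
    consMatrix a F i.succ j.succ = F i j := rfl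

theorem consMatrix_mul (a b : R) (F G : Matrix (Fin l) (Fin l) R) :
    consMatrix a F * consMatrix b G = consMatrix (a * b) (F * G) := by
  ext i j
  refine Fin.cases ?_ (fun i => ?_) i <;> refine Fin.cases ?_ (fun j => ?_) j <;>
  simp [Matrix.mul_apply, Fin.sum_univ_succ]

theorem det_consMatrix (a : R) (F : Matrix (Fin l) (Fin l) R) :
    (consMatrix a F).det = a * F.det := by
  rw [Matrix.det_succ_row_zero, Fin.sum_univ_succ]
  simp only [consMatrix_zero_zero, consMatrix_zero_succ]
  simp
  rfl

theorem consMatrix_diagonal (a : R) (d : Fin l → R) :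
    consMatrix a (Matrix.diagonal d) = Matrix.diagonal (Fin.cons a d : Fin (l + 1) → R) := by
  ext i j
  refine Fin.cases ?_ (fun i => ?_) i <;> refine Fin.cases ?_ (fun j => ?_) j <;>
  simp [Matrix.diagonal_apply, Fin.succ_ne_zero, (Fin.succ_ne_zero _).symm]

theorem MatrixEquiv.consMatrix {F G : Matrix (Fin l) (Fin l) R} (h : MatrixEquiv F G) (a : R) :
    MatrixEquiv (consMatrix a F) (consMatrix a G) := by
  obtain ⟨U, V, hU, hV, rfl⟩ := h
  exact ⟨_root_.consMatrix 1 U, _root_.consMatrix 1 V, by simpa [det_consMatrix] using hU,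
    by simpa [det_consMatrix] using hV, by simp [consMatrix_mul]⟩

theorem span_minorsSet_consMatrix (i : ℕ) (F : Matrix (Fin l) (Fin l) R) :
    Ideal.span (minorsSet (i + 1) (consMatrix 1 F)) = Ideal.span (minorsSet i F) := by
  have key : ∀ f g : Fin i → Fin l, (F.submatrix f g).det = ((consMatrix 1 F).submatrix
      (Fin.cons 0 (Fin.succ ∘ f) : Fin (i + 1) → Fin (l + 1))
      (Fin.cons 0 (Fin.succ ∘ g) : Fin (i + 1) → Fin (l + 1))).det := by
    intro f g
    have : (consMatrix 1 F).submatrix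
      (Fin.cons 0 (Fin.succ ∘ f) : Fin (i + 1) → Fin (l + 1))
      (Fin.cons 0 (Fin.succ ∘ g) : Fin (i + 1) → Fin (l + 1)) =
        consMatrix 1 (F.submatrix f g) := by
      ext a b
      refine Fin.cases ?_ (fun a => ?_) a <;> refine Fin.cases ?_ (fun b => ?_) b <;> simp
    rw [this, det_consMatrix, one_mul]
  apply le_antisymm
  · rw [Ideal.span_le]
    rintro _ ⟨f, g, hf, hg, rfl⟩
    have hsucc : ∀ f : Fin (i + 1) → Fin (l + 1), StrictMono f →
        ∃ f' : Fin i → Fin l, ∀ a, f a.succ = (f' a).succ := by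
      intro f hf
      have : ∀ a : Fin i, ∃ b : Fin l, f a.succ = b.succ := fun a => by
        obtain ⟨b, hb⟩ := Fin.exists_succ_eq.2
          (Fin.pos_iff_ne_zero.1 ((Fin.zero_le _).trans_lt (hf (Fin.succ_pos a))))
        exact ⟨b, hb.symm⟩
      choose f' hf' using this
      exact ⟨f', hf'⟩
    obtain ⟨f', hf'⟩ := hsucc f hf
    obtain ⟨g', hg'⟩ := hsucc g hg
    by_cases hf0 : f 0 = 0
    · by_cases hg0 : g 0 = 0
      · have h1 : f = Fin.cons 0 (Fin.succ ∘ f') := by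
          ext a; refine Fin.cases ?_ (fun a => ?_) a <;> simp [hf0, hf']
        have h2 : g = Fin.cons 0 (Fin.succ ∘ g') := by
          ext a; refine Fin.cases ?_ (fun a => ?_) a <;> simp [hg0, hg']
        rw [h1, h2, SetLike.mem_coe, ← key]
        exact det_submatrix_mem_span_minorsSet _ _ _
      · obtain ⟨b, hb⟩ := Fin.exists_succ_eq.2 hg0
        rw [Matrix.det_eq_zero_of_row_eq_zero 0]
        · exact zero_mem _
        · intro j
          refine Fin.cases ?_ (fun j => ?_) j <;> simp [hf0, hg', ← hb]
    · obtain ⟨b, hb⟩ := Fin.exists_succ_eq.2 hf0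
      by_cases hg0 : g 0 = 0
      · rw [Matrix.det_eq_zero_of_column_eq_zero 0]
        · exact zero_mem _
        · intro j
          refine Fin.cases ?_ (fun j => ?_) j <;> simp [hg0, hf', ← hb]
      · obtain ⟨c, hc⟩ := Fin.exists_succ_eq.2 hg0
        have h1 : (consMatrix 1 F).submatrix f g = F.submatrix
            (Fin.cons b f' : Fin (i + 1) → Fin l) (Fin.cons c g' : Fin (i + 1) → Fin l) := by
          ext x y
          refine Fin.cases ?_ (fun x => ?_) x <;> refine Fin.cases ?_ (fun y => ?_) y <;>
            simp [hf', hg', ← hb, ← hc]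
        rw [h1, Matrix.det_succ_row_zero]
        refine Ideal.sum_mem _ fun j _ => Ideal.mul_mem_left _ _ ?_
        rw [Matrix.submatrix_submatrix]
        exact det_submatrix_mem_span_minorsSet _ _ _
  · rw [Ideal.span_le]
    rintro _ ⟨f, g, -, -, rfl⟩
    rw [key]
    exact det_submatrix_mem_span_minorsSet _ _ _

end Minors

section Elimination

variable {R : Type*} [CommRing R]

/-- Every square matrix whose entries generate the unit ideal is equivalent to a matrix whose
top left entry is a unit. -/
def HasUnitPivots (R : Type*) [CommRing R] : Prop :=
  ∀ (l : ℕ) (F : Matrix (Fin (l + 1)) (Fin (l + 1)) R), Ideal.span (minorsSet 1 F) = ⊤ →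
    ∃ G, MatrixEquiv F G ∧ IsUnit (G 0 0)

theorem exists_matrixEquiv_consMatrix {l : ℕ} {G : Matrix (Fin (l + 1)) (Fin (l + 1)) R}
    (hG : IsUnit (G 0 0)) : ∃ F, MatrixEquiv G (consMatrix 1 F) := by
  obtain ⟨b, hb⟩ := hG.exists_left_inv
  have hbu : IsUnit b := .of_mul_eq_one _ hb
  let U : Matrix (Fin (l + 1)) (Fin (l + 1)) R :=
    Matrix.of (Fin.cons (Fin.cons b 0) fun i => Fin.cons (-(G i.succ 0 * b))
      ((1 : Matrix (Fin l) (Fin l) R) i))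
  let V : Matrix (Fin (l + 1)) (Fin (l + 1)) R :=
    Matrix.of (Fin.cons (Fin.cons 1 fun j => -(b * G 0 j.succ)) fun i => Fin.cons 0
      ((1 : Matrix (Fin l) (Fin l) R) i))
  have hU00 : U 0 0 = b := rfl
  have hU0 : ∀ j : Fin l, U 0 j.succ = 0 := fun _ => rfl
  have hU1 : ∀ i : Fin l, U i.succ 0 = -(G i.succ 0 * b) := fun _ => rfl
  have hU2 : ∀ i j : Fin l, U i.succ j.succ = (1 : Matrix (Fin l) (Fin l) R) i j :=
    fun _ _ => rfl
  have hV00 : V 0 0 = 1 := rfl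
  have hV0 : ∀ j : Fin l, V 0 j.succ = -(b * G 0 j.succ) := fun _ => rfl
  have hV1 : ∀ i : Fin l, V i.succ 0 = 0 := fun _ => rfl
  have hV2 : ∀ i j : Fin l, V i.succ j.succ = (1 : Matrix (Fin l) (Fin l) R) i j :=
    fun _ _ => rfl
  have hUdet : IsUnit U.det := by
    rw [Matrix.det_succ_row_zero, Fin.sum_univ_succ]
    simp only [hU0, hU00]
    have : U.submatrix Fin.succ Fin.succ = 1 := by
      ext i j; simp [hU2]
    simpa [this] using hbu
  have hVdet : IsUnit V.det := by
    rw [Matrix.det_succ_column_zero, Fin.sum_univ_succ]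
    simp only [hV1, hV00]
    have : V.submatrix Fin.succ Fin.succ = 1 := by
      ext i j; simp [hV2]
    simp [this]
  have hUG0 : ∀ j, (U * G) 0 j = b * G 0 j := fun j => by
    simp [Matrix.mul_apply, Fin.sum_univ_succ, hU00, hU0]
  have hUG1 : ∀ i : Fin l, (U * G) i.succ 0 = 0 := fun i => by
    simp only [Matrix.mul_apply, Fin.sum_univ_succ, hU1, hU2, Matrix.one_apply]
    simp only [ite_mul, one_mul, zero_mul, Finset.sum_ite_eq, Finset.mem_univ, if_true]
    linear_combination -G i.succ 0 * hb
  refine ⟨(U * G * V).submatrix Fin.succ Fin.succ, MatrixEquiv.symm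
    ⟨U, V, hUdet, hVdet, ?_⟩⟩
  ext i j
  refine Fin.cases ?_ (fun i => ?_) i <;> refine Fin.cases ?_ (fun j => ?_) j
  · simp [Matrix.mul_apply (M := U * G), Fin.sum_univ_succ, hV00, hV1, hUG0, hb]
  · simp only [Matrix.mul_apply (M := U * G), Fin.sum_univ_succ, hV0, hV2, hUG0,
      Matrix.one_apply, consMatrix_zero_succ]
    simp only [mul_ite, mul_one, mul_zero, Finset.sum_ite_eq', Finset.mem_univ, if_true]
    linear_combination b * G 0 j.succ * hb
  · simp [Matrix.mul_apply (M := U * G), Fin.sum_univ_succ, hV00, hV1, hUG1]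
  · simp

/-- The sum of the first `i` values of `s`. -/
def initialSum {l : ℕ} (s : Fin l → ℕ) (i : ℕ) : ℕ :=
  ∑ j : Fin l, if (j : ℕ) < i then s j else 0

theorem initialSum_succ {l : ℕ} (s : Fin (l + 1) → ℕ) (i : ℕ) :
    initialSum s (i + 1) = s 0 + initialSum (fun j => s j.succ) i := by
  simp [initialSum, Fin.sum_univ_succ]

theorem initialSum_add_const {l : ℕ} (s : Fin l → ℕ) (c i : ℕ) (hi : i ≤ l) :
    initialSum (fun j => c + s j) i = c * i + initialSum s i := by
  induction l generalizing i with
  | zero => simp [initialSum, Nat.le_zero.1 hi]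
  | succ l ih =>
    cases i with
    | zero => simp [initialSum]
    | succ i =>
      rw [initialSum_succ, initialSum_succ, ih _ _ (Nat.succ_le_succ_iff.1 hi)]
      ring

theorem matrixEquiv_diagonal_of_hasUnitPivots [IsDomain R] (hR : HasUnitPivots R) {p : R}
    (hp : p ≠ 0) {l : ℕ} (s : Fin l → ℕ) (hs : Monotone s) (F : Matrix (Fin l) (Fin l) R)
    (hF : ∀ i ≤ l, Ideal.span (minorsSet i F) = Ideal.span {p ^ initialSum s i}) :
    MatrixEquiv F (Matrix.diagonal fun i => p ^ s i) := by
  induction l with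
  | zero => rw [Subsingleton.elim F (Matrix.diagonal fun i => p ^ s i)]; exact .refl _
  | succ l ih =>
    have hp0 : p ^ s 0 ≠ 0 := pow_ne_zero _ hp
    have h1 := hF 1 (by omega)
    have hs1 : initialSum s 1 = s 0 := by simp [initialSum]
    rw [hs1] at h1
    have hdvd : ∀ i j, p ^ s 0 ∣ F i j := fun i j => by
      rw [← Ideal.mem_span_singleton, ← h1]
      exact apply_mem_span_minorsSet_one F i j
    choose F₀ hF₀ using hdvd
    have hFF₀ : F = p ^ s 0 • Matrix.of F₀ := by ext i j; simp [hF₀]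
    have h2 : Ideal.span (minorsSet 1 (Matrix.of F₀)) = ⊤ := by
      rw [hFF₀, span_minorsSet_smul, pow_one] at h1
      exact Ideal.span_singleton_mul_right_injective hp0 (by simpa using h1)
    obtain ⟨G, hG, hGu⟩ := hR l _ h2
    obtain ⟨F', hF'⟩ := exists_matrixEquiv_consMatrix hGu
    have hs' : ∀ j : Fin l, s j.succ = s 0 + (s j.succ - s 0) := fun j =>
      (Nat.add_sub_cancel' (hs (Fin.zero_le _))).symm
    have hF'd := ih (fun j => s j.succ - s 0)
      (fun a b hab => Nat.sub_le_sub_right (hs (Fin.succ_le_succ_iff.2 hab)) _) F' fun i hi => by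
        have h3 := hF (i + 1) (by omega)
        have he : initialSum s (i + 1) =
            s 0 * (i + 1) + initialSum (fun j : Fin l => s j.succ - s 0) i := by
          rw [initialSum_succ, funext hs', initialSum_add_const _ _ _ hi]
          ring
        rw [hFF₀, span_minorsSet_smul, (hG.trans hF').span_minorsSet_eq,
          span_minorsSet_consMatrix, he, pow_add p, pow_mul, ← Ideal.span_singleton_mul_span_singleton]
          at h3
        exact Ideal.span_singleton_mul_right_injective (pow_ne_zero _ hp0) h3
    have h4 := ((hG.trans hF').trans (hF'd.consMatrix 1)).smul (p ^ s 0)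
    rw [← hFF₀] at h4
    convert h4 using 1
    rw [consMatrix_diagonal]
    ext i j
    by_cases hij : i = j
    · subst hij
      refine Fin.cases ?_ (fun i => ?_) i
      · simp
      · simp only [Matrix.diagonal_apply_eq, Matrix.smul_apply, Fin.cons_succ, smul_eq_mul]
        rw [← pow_add, ← hs']
    · simp [hij]

theorem MatrixEquiv.swap_rows {l : ℕ} (F : Matrix (Fin l) (Fin l) R) (i j : Fin l) :
    MatrixEquiv F (F.submatrix (Equiv.swap i j) id) := by
  refine MatrixEquiv.symm ⟨(Equiv.swap i j).toPEquiv.toMatrix, 1, ?_, by simp, ?_⟩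
  · rw [Matrix.det_permutation]
    exact (Units.isUnit _).map (Int.castRingHom R)
  · rw [Matrix.mul_one, PEquiv.toMatrix_toPEquiv_mul]

theorem MatrixEquiv.transpose {l : ℕ} {F G : Matrix (Fin l) (Fin l) R} (h : MatrixEquiv F G) :
    MatrixEquiv F.transpose G.transpose := by
  obtain ⟨U, V, hU, hV, rfl⟩ := h
  exact ⟨V.transpose, U.transpose, by simpa, by simpa, by simp [Matrix.mul_assoc]⟩

theorem MatrixEquiv.swap {l : ℕ} (F : Matrix (Fin (l + 1)) (Fin (l + 1)) R) (i j : Fin (l + 1)) :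
    MatrixEquiv F (F.submatrix (Equiv.swap 0 i) (Equiv.swap 0 j)) :=
  (MatrixEquiv.swap_rows F 0 i).trans
    (MatrixEquiv.swap_rows (F.submatrix (Equiv.swap 0 i) id).transpose 0 j).transpose

theorem hasUnitPivots_of_isLocalRing [IsLocalRing R] : HasUnitPivots R := by
  intro l F hF
  obtain ⟨i, j, hij⟩ : ∃ i j, IsUnit (F i j) := by
    by_contra! h
    have : Ideal.span (minorsSet 1 F) ≤ IsLocalRing.maximalIdeal R := by
      rw [Ideal.span_le]
      rintro _ ⟨f, g, -, -, rfl⟩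
      simpa using h (f 0) (g 0)
    exact IsLocalRing.maximalIdeal.isMaximal R |>.ne_top (top_le_iff.1 (hF ▸ this))
  exact ⟨_, MatrixEquiv.swap F i j, by simpa using hij⟩

theorem hasUnitPivots_of_euclideanDomain {R : Type*} [EuclideanDomain R] : HasUnitPivots R := by
  intro l F hF
  let T : Set R := {a | a ≠ 0 ∧ ∃ G i j, MatrixEquiv F G ∧ G i j = a}
  have hT : T.Nonempty := by
    by_contra h
    have h0 : F = 0 := by
      ext i j
      by_contra hij
      exact h ⟨_, hij, F, i, j, .refl _, rfl⟩
    have : Ideal.span (minorsSet 1 F) ≤ ⊥ := by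
      rw [Ideal.span_le]
      rintro _ ⟨f, g, -, -, rfl⟩
      simp [h0]
    exact bot_ne_top (bot_unique this ▸ hF)
  obtain ⟨a, ⟨ha, G, i, j, hG, hGa⟩, hmin⟩ :=
    EuclideanDomain.r_wellFounded.has_min T hT
  have hrem : ∀ b, b % a ∈ T ∨ b % a = 0 → a ∣ b := by
    rintro b (hb | hb)
    · exact absurd (EuclideanDomain.mod_lt b ha) (hmin _ hb)
    · exact (EuclideanDomain.mod_eq_zero).1 hb
  have hmem : ∀ H, MatrixEquiv F H → ∀ i j, H i j ∈ T ∨ H i j = 0 := fun H hH i j => by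
    by_cases h0 : H i j = 0
    · exact .inr h0
    · exact .inl ⟨h0, H, i, j, hH, rfl⟩
  have hrowop : ∀ H, MatrixEquiv F H → ∀ i i' c, i' ≠ i →
      MatrixEquiv F (Matrix.transvection i' i c * H) := fun H hH i i' c hi =>
    hH.trans (MatrixEquiv.mul_left (by simp [Matrix.det_transvection_of_ne _ _ hi])).symm
  have hcolop : ∀ H, MatrixEquiv F H → ∀ j j' c, j ≠ j' →
      MatrixEquiv F (H * Matrix.transvection j j' c) := fun H hH i i' c hi =>
    hH.trans (MatrixEquiv.mul_right (by simp [Matrix.det_transvection_of_ne _ _ hi])).symm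
  have hcol : ∀ H, MatrixEquiv F H → ∀ i j, H i j = a → ∀ i', a ∣ H i' j := by
    intro H hH i j hij i'
    by_cases hi : i' = i
    · rw [hi, hij]
    · have := hmem _ (hrowop H hH i i' (-(H i' j / a)) hi) i' j
      rw [Matrix.transvection_mul_apply_same, hij] at this
      refine hrem _ ?_
      rwa [EuclideanDomain.mod_eq_sub_mul_div, sub_eq_add_neg,
        show -(a * (H i' j / a)) = -(H i' j / a) * a by ring]
  have hrow : ∀ H, MatrixEquiv F H → ∀ i j, H i j = a → ∀ j', a ∣ H i j' := by
    intro H hH i j hij j'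
    by_cases hj : j = j'
    · rw [← hj, hij]
    · have := hmem _ (hcolop H hH j j' (-(H i j' / a)) hj) i j'
      rw [Matrix.mul_transvection_apply_same, hij] at this
      refine hrem _ ?_
      rwa [EuclideanDomain.mod_eq_sub_mul_div, sub_eq_add_neg,
        show -(a * (H i j' / a)) = -(H i j' / a) * a by ring]
  have hall : ∀ i' j', a ∣ G i' j' := by
    intro i' j'
    by_cases hi : i' = i
    · rw [hi]; exact hrow G hG i j hGa j'
    · obtain ⟨q, hq⟩ := hcol G hG i j hGa i'
      have h1 := hrow _ (hrowop G hG i i' (1 - q) hi) i' j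
        (by rw [Matrix.transvection_mul_apply_same, hGa, hq]; ring) j'
      rw [Matrix.transvection_mul_apply_same] at h1
      exact (dvd_add_left ((hrow G hG i j hGa j').mul_left _)).1 h1
  have hu : IsUnit a := by
    rw [hG.span_minorsSet_eq] at hF
    rw [← Ideal.span_singleton_eq_top, ← top_le_iff, ← hF, Ideal.span_le]
    rintro _ ⟨f, g, -, -, rfl⟩
    simpa [Ideal.mem_span_singleton] using hall (f 0) (g 0)
  exact ⟨_, hG.trans (MatrixEquiv.swap G i j), by simpa [hGa] using hu⟩

end Elimination

section MonicIdeals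

variable {R : Type*} [CommRing R] [IsLocalRing R]

/-- An ideal of `R[X]`, `R` local, which contains a monic polynomial and lies in no maximal ideal
over the maximal ideal of `R` is the unit ideal. -/
theorem eq_top_of_monic_mem {J : Ideal R[X]} {f : R[X]} (hf : f.Monic) (hfJ : f ∈ J)
    (h : ∀ M : Ideal R[X], M.IsMaximal → (IsLocalRing.maximalIdeal R).map C ≤ M → ∃ w ∈ J, w ∉ M) :
    J = ⊤ := by
  by_contra hJ
  obtain ⟨M, hM, hJM⟩ := Ideal.exists_le_maximal J hJ
  have hintegral := hf.quotient_isIntegral (hJM hfJ)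
  have : (⊥ : Ideal (R[X] ⧸ M)).IsMaximal := by
    let _ := Ideal.Quotient.field M
    exact Ideal.bot_isMaximal
  have hmax := Ideal.isMaximal_comap_of_isIntegral_of_isMaximal' _ hintegral ⊥
  have hle : (IsLocalRing.maximalIdeal R).map C ≤ M := by
    rw [Ideal.map_le_iff_le_comap, ← IsLocalRing.eq_maximalIdeal hmax]
    intro r hr
    exact (Ideal.Quotient.eq_zero_iff_mem (I := M) (a := C r)).1 hr
  obtain ⟨w, hwJ, hwM⟩ := h M hM hle
  exact hwM (hJM hwJ)

theorem mem_map_C_maximalIdeal_iff {a : R[X]} :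
    a ∈ (IsLocalRing.maximalIdeal R).map (C : R →+* R[X]) ↔
      a.map (IsLocalRing.residue R) = 0 := by
  rw [Ideal.mem_map_C_iff, Polynomial.ext_iff]
  simp [IsLocalRing.residue_eq_zero_iff]

/-- An ideal of `R[X]`, `R` local, which contains a monic polynomial contains a monic polynomial
which generates it modulo the maximal ideal of `R`. -/
theorem exists_monic_mem_map_dvd {I : Ideal R[X]} {f : R[X]} (hf : f.Monic) (hfI : f ∈ I) :
    ∃ h ∈ I, h.Monic ∧
      ∀ a ∈ I, h.map (IsLocalRing.residue R) ∣ a.map (IsLocalRing.residue R) := by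
  classical
  let ρ := IsLocalRing.residue R
  have hρ : Function.Surjective ρ := IsLocalRing.residue_surjective
  have hρ' : Function.Surjective (mapRingHom ρ) := Polynomial.map_surjective _ hρ
  let Ibar := I.map (mapRingHom ρ)
  obtain ⟨g₀, hg₀⟩ := (IsPrincipalIdealRing.principal Ibar).principal
  have hg₀I : Ibar = Ideal.span {g₀} := hg₀
  have hmem : ∀ a ∈ I, a.map ρ ∈ Ideal.span {g₀} := fun a ha => by
    rw [← hg₀I]; exact Ideal.mem_map_of_mem (mapRingHom ρ) ha
  have hg₀0 : g₀ ≠ 0 := by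
    rintro rfl
    have := hmem f hfI
    rw [Ideal.mem_span_singleton, zero_dvd_iff] at this
    exact (hf.map ρ).ne_zero this
  have hg : (normalize g₀).Monic := Polynomial.monic_normalize hg₀0
  obtain ⟨G, hGg, -, hG⟩ := lifts_and_natDegree_eq_and_monic
    (f := ρ) ((Polynomial.mem_lifts _).2 (Polynomial.map_surjective _ hρ _)) hg
  have hgI : normalize g₀ ∈ Ibar := by
    rw [hg₀I, Ideal.mem_span_singleton]; exact (associated_normalize g₀).dvd
  obtain ⟨k, hkI, hk⟩ := (Ideal.mem_map_iff_of_surjective _ hρ').1 hgI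
  have hfin : Module.Finite R (R[X] ⧸ I) := by
    have := hf.finite_quotient
    have hle := (Ideal.span_singleton_le_iff_mem I).2 hfI
    exact Module.Finite.of_surjective (Ideal.Quotient.factorₐ R hle).toLinearMap
      (Ideal.Quotient.factor_surjective hle)
  let π : R[X] →ₐ[R] R[X] ⧸ I := Ideal.Quotient.mkₐ R I
  have hnak : (⊤ : Submodule R (R[X] ⧸ I)) ≤ (degreeLT R G.natDegree).map π.toLinearMap := by
    refine Submodule.le_of_le_smul_of_le_jacobson_bot (I := IsLocalRing.maximalIdeal R)
      Module.Finite.fg_top (IsLocalRing.maximalIdeal_le_jacobson _) ?_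
    rintro x -
    obtain ⟨a, rfl⟩ := Ideal.Quotient.mk_surjective x
    have hdecomp : a = k * (a /ₘ G) + (a %ₘ G + (G - k) * (a /ₘ G)) := by
      linear_combination -modByMonic_add_div a G
    have h1 : Ideal.Quotient.mk I a = π (a %ₘ G) + π ((G - k) * (a /ₘ G)) := by
      conv_lhs => rw [hdecomp]
      rw [map_add, Ideal.Quotient.eq_zero_iff_mem.2 (I.mul_mem_right _ hkI), zero_add, map_add]
      rfl
    rw [h1]
    refine Submodule.add_mem_sup (Submodule.mem_map_of_mem ?_) ?_
    · rw [mem_degreeLT, ← degree_eq_natDegree hG.ne_zero]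
      exact degree_modByMonic_lt _ hG
    · rw [Ideal.smul_top_eq_map]
      have h2 : (G - k) * (a /ₘ G) ∈ (IsLocalRing.maximalIdeal R).map (C : R →+* R[X]) := by
        rw [mem_map_C_maximalIdeal_iff, Polynomial.map_mul, Polynomial.map_sub, hGg]
        have : k.map (IsLocalRing.residue R) = normalize g₀ := hk
        rw [this, sub_self, zero_mul]
      have h3 := Ideal.mem_map_of_mem (π : R[X] →+* R[X] ⧸ I) h2
      rw [Ideal.map_map] at h3
      exact h3
  obtain ⟨r, hr, hrG⟩ := hnak (Submodule.mem_top : π G ∈ _)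
  have hrG' : G - r ∈ I := by
    rw [← Ideal.Quotient.eq_zero_iff_mem, map_sub, sub_eq_zero]
    exact hrG.symm
  have hrd : r.degree < G.degree := by
    rw [degree_eq_natDegree hG.ne_zero]; exact mem_degreeLT.1 hr
  have hmon : (G - r).Monic := hG.sub_of_left hrd
  have hrbar : r.map ρ = 0 := by
    have h4 : normalize g₀ ∣ r.map ρ := by
      have := hmem _ hrG'
      rw [Ideal.mem_span_singleton, ← normalize_dvd_iff, Polynomial.map_sub, hGg] at this
      exact (dvd_sub_right dvd_rfl).1 this
    by_contra h0
    have := degree_le_of_dvd h4 h0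
    rw [← hGg, hG.degree_map] at this
    exact absurd (this.trans (degree_map_le)) (not_le.2 hrd)
  refine ⟨G - r, hrG', hmon, fun a ha => ?_⟩
  have : (G - r).map ρ = normalize g₀ := by rw [Polynomial.map_sub, hrbar, hGg, sub_zero]
  change (G - r).map ρ ∣ a.map ρ
  rw [this, normalize_dvd_iff]
  exact Ideal.mem_span_singleton.1 (hmem a ha)

end MonicIdeals

section NearDiag

variable {S : Type*} [CommRing S] {P Q : Type*} [AddCommGroup P] [Module S P] [AddCommGroup Q]
  [Module S Q] {l : ℕ}

/-- Linear maps from `P` and `Q` to free modules, invertible up to the factor `w`, which turn `φ`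
into the diagonal map with entries `q`. -/
structure NearDiag (w : S) (q : Fin l → S) (φ : P →ₗ[S] Q) where
  /-- The coordinates on `P`. -/
  v : P →ₗ[S] (Fin l → S)
  /-- The inverse of `v` up to the factor `w`. -/
  v' : (Fin l → S) →ₗ[S] P
  /-- The coordinates on `Q`. -/
  u : Q →ₗ[S] (Fin l → S)
  /-- The inverse of `u` up to the factor `w`. -/
  u' : (Fin l → S) →ₗ[S] Q
  v'_v : ∀ a, v' (v a) = w • a
  v_v' : ∀ x, v (v' x) = w • x
  u'_u : ∀ b, u' (u b) = w • b
  u_u' : ∀ y, u (u' y) = w • y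
  u_apply : ∀ a i, u (φ a) i = q i * v a i

namespace NearDiag

/-- Permute coordinates with the same diagonal entry. -/
def reindex {w : S} {q : Fin l → S} {φ : P →ₗ[S] Q} (D : NearDiag w q φ)
    (σ : Equiv.Perm (Fin l)) (hσ : ∀ i, q (σ i) = q i) : NearDiag w q φ where
  v := (LinearMap.funLeft S S σ).comp D.v
  v' := D.v'.comp (LinearMap.funLeft S S σ.symm)
  u := (LinearMap.funLeft S S σ).comp D.u
  u' := D.u'.comp (LinearMap.funLeft S S σ.symm)
  v'_v a := by
    rw [← D.v'_v]; exact congrArg D.v' (by ext i; simp [LinearMap.funLeft_apply])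
  v_v' x := by
    ext i; simp [D.v_v', LinearMap.funLeft_apply]
  u'_u a := by
    rw [← D.u'_u]; exact congrArg D.u' (by ext i; simp [LinearMap.funLeft_apply])
  u_u' x := by
    ext i; simp [D.u_u', LinearMap.funLeft_apply]
  u_apply a i := by simp [D.u_apply, LinearMap.funLeft_apply, hσ]

/-- Multiply the map and the diagonal entries by a scalar. -/
def smul {w : S} {q : Fin l → S} {φ : P →ₗ[S] Q} (D : NearDiag w q φ) (c : S) :
    NearDiag w (fun i => c * q i) (c • φ) where
  __ := D
  u_apply a i := by simp [D.u_apply, mul_assoc]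

/-- Cancel a common factor of the map and the diagonal entries. -/
def ofSMul [IsDomain S] {w c : S} {q : Fin l → S} {φ : P →ₗ[S] Q} (hc : c ≠ 0)
    (D : NearDiag w (fun i => c * q i) (c • φ)) : NearDiag w q φ where
  __ := D
  u_apply a i := mul_left_cancel₀ hc (by simpa [mul_assoc] using D.u_apply a i)

end NearDiag

/-- The projection onto the kernel of `χ` along `e`, if `χ e = 1`. -/
def kerProj (χ : P →ₗ[S] S) (e : P) (he : χ e = 1) : P →ₗ[S] LinearMap.ker χ :=
  (LinearMap.id - χ.smulRight e).codRestrict _ fun a => by simp [he]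

@[simp] theorem coe_kerProj (χ : P →ₗ[S] S) (e : P) (he : χ e = 1) (a : P) :
    (kerProj χ e he a : P) = a - χ a • e := rfl

/-- The coordinates on the kernel of a functional induced by coordinates `v`. -/
def kerCoord (χ : P →ₗ[S] S) (v : P →ₗ[S] (Fin (l + 1) → S)) (e : P) :
    LinearMap.ker χ →ₗ[S] (Fin l → S) :=
  LinearMap.pi fun i => (v e 0 • (LinearMap.proj i.succ).comp v -
    v e i.succ • (LinearMap.proj 0).comp v).comp (LinearMap.ker χ).subtype

@[simp] theorem kerCoord_apply (χ : P →ₗ[S] S) (v : P →ₗ[S] (Fin (l + 1) → S)) (e : P)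
    (a : LinearMap.ker χ) (i : Fin l) :
    kerCoord χ v e a i = v e 0 * v a i.succ - v e i.succ * v a 0 := rfl

/-- The inverse of `kerCoord` up to a factor. -/
def kerCoordInv (χ : P →ₗ[S] S) (v' : (Fin (l + 1) → S) →ₗ[S] P) (e : P) (he : χ e = 1) :
    (Fin l → S) →ₗ[S] LinearMap.ker χ :=
  (kerProj χ e he).comp (v'.comp
    (LinearMap.pi (Fin.cons 0 LinearMap.proj : (i : Fin (l + 1)) → (Fin l → S) →ₗ[S] S)))

theorem coe_kerCoordInv (χ : P →ₗ[S] S) (v' : (Fin (l + 1) → S) →ₗ[S] P) (e : P) (he : χ e = 1)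
    (x : Fin l → S) : (kerCoordInv χ v' e he x : P) =
      v' (Fin.cons 0 x) - χ (v' (Fin.cons 0 x)) • e := by
  have : LinearMap.pi (Fin.cons 0 LinearMap.proj : (i : Fin (l + 1)) → (Fin l → S) →ₗ[S] S) x =
      Fin.cons 0 x := by
    ext i; refine Fin.cases ?_ (fun i => ?_) i <;> simp
  simp [kerCoordInv, this]

theorem kerCoordInv_kerCoord {χ : P →ₗ[S] S} {v : P →ₗ[S] (Fin (l + 1) → S)}
    {v' : (Fin (l + 1) → S) →ₗ[S] P} {e : P} {w : S} (he : χ e = 1)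
    (h : ∀ a, v' (v a) = w • a) (a : LinearMap.ker χ) :
    kerCoordInv χ v' e he (kerCoord χ v e a) = (v e 0 * w) • a := by
  have hx : (Fin.cons 0 (kerCoord χ v e a) : Fin (l + 1) → S) =
      v e 0 • v (a : P) - v (a : P) 0 • v e := by
    ext i
    refine Fin.cases ?_ (fun i => ?_) i
    · simp [mul_comm]
    · simp [mul_comm]
  have ha : χ (a : P) = 0 := a.2
  apply Subtype.ext
  rw [coe_kerCoordInv, hx, map_sub, map_smul, map_smul, h, h]
  simp only [map_sub, map_smul, ha, he, smul_eq_mul, mul_zero, mul_one, zero_sub,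
    Submodule.coe_smul, mul_smul, neg_smul]
  abel

theorem kerCoord_kerCoordInv {χ : P →ₗ[S] S} {v : P →ₗ[S] (Fin (l + 1) → S)}
    {v' : (Fin (l + 1) → S) →ₗ[S] P} {e : P} {w : S} (he : χ e = 1)
    (h : ∀ x, v (v' x) = w • x) (x : Fin l → S) :
    kerCoord χ v e (kerCoordInv χ v' e he x) = (v e 0 * w) • x := by
  ext i
  rw [kerCoord_apply, coe_kerCoordInv, map_sub, map_smul, h]
  simp
  ring

/-- Extend coordinates on the kernel of `χ` by the coordinate `χ`. -/
def consCoord (χ : P →ₗ[S] S) (e : P) (he : χ e = 1) (v : LinearMap.ker χ →ₗ[S] (Fin l → S)) :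
    P →ₗ[S] (Fin (l + 1) → S) :=
  LinearMap.pi (Fin.cons χ fun i => ((LinearMap.proj i).comp v).comp (kerProj χ e he) :
    (i : Fin (l + 1)) → P →ₗ[S] S)

@[simp] theorem consCoord_apply_zero (χ : P →ₗ[S] S) (e : P) (he : χ e = 1)
    (v : LinearMap.ker χ →ₗ[S] (Fin l → S)) (a : P) : consCoord χ e he v a 0 = χ a := rfl

@[simp] theorem consCoord_apply_succ (χ : P →ₗ[S] S) (e : P) (he : χ e = 1)
    (v : LinearMap.ker χ →ₗ[S] (Fin l → S)) (a : P) (i : Fin l) :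
    consCoord χ e he v a i.succ = v (kerProj χ e he a) i := rfl

/-- The inverse of `consCoord`. -/
def consCoordInv (χ : P →ₗ[S] S) (e : P) (v' : (Fin l → S) →ₗ[S] LinearMap.ker χ) :
    (Fin (l + 1) → S) →ₗ[S] P :=
  (LinearMap.proj 0).smulRight e +
    ((LinearMap.ker _).subtype.comp v').comp (LinearMap.funLeft S S Fin.succ)

theorem consCoordInv_apply (χ : P →ₗ[S] S) (e : P) (v' : (Fin l → S) →ₗ[S] LinearMap.ker χ)
    (x : Fin (l + 1) → S) :
    consCoordInv χ e v' x = x 0 • e + (v' fun i => x i.succ : P) := rfl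

theorem consCoordInv_consCoord {χ : P →ₗ[S] S} {e : P} (he : χ e = 1)
    {v : LinearMap.ker χ →ₗ[S] (Fin l → S)} {v' : (Fin l → S) →ₗ[S] LinearMap.ker χ}
    (h : ∀ a, v' (v a) = (1 : S) • a) (a : P) :
    consCoordInv χ e v' (consCoord χ e he v a) = (1 : S) • a := by
  have : (fun i : Fin l => consCoord χ e he v a i.succ) = v (kerProj χ e he a) := rfl
  rw [consCoordInv_apply, this, h]
  simp

theorem consCoord_consCoordInv {χ : P →ₗ[S] S} {e : P} (he : χ e = 1)
    {v : LinearMap.ker χ →ₗ[S] (Fin l → S)} {v' : (Fin l → S) →ₗ[S] LinearMap.ker χ}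
    (h : ∀ x, v (v' x) = (1 : S) • x) (x : Fin (l + 1) → S) :
    consCoord χ e he v (consCoordInv χ e v' x) = (1 : S) • x := by
  have hχ : χ (consCoordInv χ e v' x) = x 0 := by
    simp [consCoordInv_apply, he]
  have hproj : kerProj χ e he (consCoordInv χ e v' x) = v' fun i => x i.succ := by
    apply Subtype.ext
    rw [coe_kerProj, hχ, consCoordInv_apply, add_sub_cancel_left]
  ext i
  refine Fin.cases ?_ (fun i => ?_) i
  · simp [hχ]
  · rw [consCoord_apply_succ, hproj, h]
    simp

/-- The restriction of `φ` to the kernels of `ψ ∘ φ` and `ψ`. -/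
def kerRestrict (φ : P →ₗ[S] Q) (ψ : Q →ₗ[S] S) :
    LinearMap.ker (ψ.comp φ) →ₗ[S] LinearMap.ker ψ :=
  φ.restrict fun _ ha => ha

@[simp] theorem coe_kerRestrict (φ : P →ₗ[S] Q) (ψ : Q →ₗ[S] S) (a : LinearMap.ker (ψ.comp φ)) :
    (kerRestrict φ ψ a : Q) = φ a := rfl

namespace NearDiag

/-- Split off the coordinate of index `0`. -/
def ker {w : S} {q : Fin (l + 1) → S} {φ : P →ₗ[S] Q} (D : NearDiag w q φ) (hq : q 0 = 1)
    (ψ : Q →ₗ[S] S) (e : P) (he : ψ (φ e) = 1) :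
    NearDiag (D.v e 0 * w) (fun i => q i.succ) (kerRestrict φ ψ) where
  v := kerCoord (ψ.comp φ) D.v e
  v' := kerCoordInv (ψ.comp φ) D.v' e he
  u := kerCoord ψ D.u (φ e)
  u' := kerCoordInv ψ D.u' (φ e) he
  v'_v := kerCoordInv_kerCoord (χ := ψ.comp φ) he D.v'_v
  v_v' := kerCoord_kerCoordInv (χ := ψ.comp φ) he D.v_v'
  u'_u b := by
    rw [kerCoordInv_kerCoord he D.u'_u, D.u_apply, hq, one_mul]
  u_u' y := by
    rw [kerCoord_kerCoordInv he D.u_u', D.u_apply, hq, one_mul]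
  u_apply a i := by
    simp only [kerCoord_apply, coe_kerRestrict, D.u_apply, hq]
    ring

/-- Add a coordinate of index `0`. -/
def cons {q : Fin (l + 1) → S} {φ : P →ₗ[S] Q} (hq : q 0 = 1)
    (ψ : Q →ₗ[S] S) (e : P) (he : ψ (φ e) = 1)
    (D : NearDiag 1 (fun i => q i.succ) (kerRestrict φ ψ)) : NearDiag 1 q φ where
  v := consCoord (ψ.comp φ) e he D.v
  v' := consCoordInv (ψ.comp φ) e D.v'
  u := consCoord ψ (φ e) he D.u
  u' := consCoordInv ψ (φ e) D.u'
  v'_v := consCoordInv_consCoord (χ := ψ.comp φ) he D.v'_v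
  v_v' := consCoord_consCoordInv (χ := ψ.comp φ) he D.v_v'
  u'_u := consCoordInv_consCoord he D.u'_u
  u_u' := consCoord_consCoordInv he D.u_u'
  u_apply a i := by
    refine Fin.cases ?_ (fun i => ?_) i
    · simp [hq]
    · rw [consCoord_apply_succ, consCoord_apply_succ, ← D.u_apply]
      have : kerProj ψ (φ e) he (φ a) = kerRestrict φ ψ (kerProj (ψ.comp φ) e he a) :=
        Subtype.ext (by simp)
      rw [this]

end NearDiag

end NearDiag

section Horrocks

variable {R : Type*} [CommRing R] [IsDomain R] [IsLocalRing R]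

theorem NearDiag.apply_v'_single {S : Type*} [CommRing S] [IsDomain S] {P Q : Type*}
    [AddCommGroup P] [Module S P] [AddCommGroup Q] [Module S Q] [Module.IsTorsionFree S Q] {l : ℕ}
    {w : S} (hw : w ≠ 0) {q : Fin l → S} {φ : P →ₗ[S] Q} (D : NearDiag w q φ) (i : Fin l) :
    φ (D.v' (Pi.single i 1)) = q i • D.u' (Pi.single i 1) := by
  have h1 : D.u (φ (D.v' (Pi.single i 1))) = (w * q i) • Pi.single i 1 := by
    ext j
    rw [D.u_apply, D.v_v']
    by_cases hij : j = i
    · subst hij; simp [mul_comm]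
    · simp [hij]
  apply smul_right_injective Q hw
  change w • _ = w • _
  rw [← D.u'_u, h1, map_smul, mul_smul]

theorem NearDiag.smul_eq_sum {S : Type*} [CommRing S] {P Q : Type*}
    [AddCommGroup P] [Module S P] [AddCommGroup Q] [Module S Q] {l : ℕ}
    {w : S} {q : Fin l → S} {φ : P →ₗ[S] Q} (D : NearDiag w q φ) (e : P) :
    w • e = ∑ i, D.v e i • D.v' (Pi.single i 1) := by
  rw [← D.v'_v, LinearMap.pi_apply_eq_sum_univ D.v' (D.v e)]
  refine Finset.sum_congr rfl fun i _ => ?_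
  congr 2
  ext j
  simp [Pi.single_apply, eq_comm]

theorem exists_notMem_of_isMaximal {p : R} (hpm : p ∈ IsLocalRing.maximalIdeal R) {l : ℕ}
    (s : Fin (l + 1) → ℕ) (hs0 : s 0 = 0) {P Q : Type*} [AddCommGroup P] [Module R[X] P]
    [AddCommGroup Q] [Module R[X] Q] [Module.IsTorsionFree R[X] Q] {φ : P →ₗ[R[X]] Q}
    {f : R[X]} (D : NearDiag f (fun i => C p ^ s i) φ) {e : P} (he : (D.v e 0).Monic)
    (hdvd : ∀ a, (D.v e 0).map (IsLocalRing.residue R) ∣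
      (D.v a 0).map (IsLocalRing.residue R))
    {M : Ideal R[X]} (hM : (IsLocalRing.maximalIdeal R).map C ≤ M) {w : R[X]} (hw : w ∉ M)
    (E : NearDiag w (fun i => C p ^ s i) φ) : ∃ i, s i = 0 ∧ E.v e i ∉ M := by
  by_contra! hcon
  have hw0 : w ≠ 0 := fun h => hw (h ▸ M.zero_mem)
  have hD : ∀ a, D.v a 0 = D.u (φ a) 0 := fun a => by simp [D.u_apply, hs0]
  have hW : ∀ i, ∃ W : R[X], (s i ≠ 0 → W = 0) ∧
      (D.v (E.v' (Pi.single i 1)) 0).map (IsLocalRing.residue R) =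
        (D.v e 0).map (IsLocalRing.residue R) * W.map (IsLocalRing.residue R) := by
    intro i
    by_cases hi : s i = 0
    · obtain ⟨W, hW⟩ := hdvd (E.v' (Pi.single i 1))
      obtain ⟨W', rfl⟩ := Polynomial.map_surjective _ IsLocalRing.residue_surjective W
      exact ⟨W', fun h => absurd hi h, hW⟩
    · refine ⟨0, fun _ => rfl, ?_⟩
      rw [hD, E.apply_v'_single hw0]
      have hp : IsLocalRing.residue R p = 0 := (IsLocalRing.residue_eq_zero_iff _).2 hpm
      simp [hp, hi]
  choose W hW0 hW using hW
  have hsum : w * D.v e 0 = ∑ i, E.v e i * D.v (E.v' (Pi.single i 1)) 0 := by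
    have := congrArg (fun a => D.v a 0) (E.smul_eq_sum e)
    simpa [map_sum, Finset.sum_apply] using this
  have hmem : w - ∑ i, E.v e i * W i ∈ M := by
    refine hM (mem_map_C_maximalIdeal_iff.2 ?_)
    have hne : (D.v e 0).map (IsLocalRing.residue R) ≠ 0 := (he.map _).ne_zero
    apply mul_right_cancel₀ hne
    have h1 := congrArg (Polynomial.map (IsLocalRing.residue R)) hsum
    simp only [Polynomial.map_mul, Polynomial.map_sum, hW] at h1
    rw [Polynomial.map_sub, sub_mul, h1, Polynomial.map_sum, Finset.sum_mul, zero_mul, sub_eq_zero]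
    refine Finset.sum_congr rfl fun i _ => ?_
    rw [Polynomial.map_mul]
    ring
  refine hw ((Submodule.sub_mem_iff_left M (M.sum_mem fun i _ => ?_)).1 hmem)
  by_cases hi : s i = 0
  · exact M.mul_mem_right _ (hcon i hi)
  · simp [hW0 i hi]

theorem exists_eq_smul_of_nearDiag {c : R[X]} (hc : c ≠ 0) {l : ℕ} (q : Fin l → R[X])
    {P Q : Type*} [AddCommGroup P] [Module R[X] P] [AddCommGroup Q] [Module R[X] Q]
    [Module.IsTorsionFree R[X] Q] (φ : P →ₗ[R[X]] Q) {f : R[X]} (hf : f.Monic)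
    (D : NearDiag f (fun i => c * q i) φ)
    (hM : ∀ M : Ideal R[X], M.IsMaximal → (IsLocalRing.maximalIdeal R).map C ≤ M →
      ∃ w ∉ M, Nonempty (NearDiag w (fun i => c * q i) φ)) :
    ∃ φ₀ : P →ₗ[R[X]] Q, φ = c • φ₀ := by
  have hinj := smul_right_injective Q hc
  let J : Ideal R[X] :=
    { carrier := {w | ∀ a, ∃ b, w • φ a = c • b}
      zero_mem' := fun a => ⟨0, by simp⟩
      add_mem' := fun {x y} hx hy a => by
        obtain ⟨b, hb⟩ := hx a
        obtain ⟨b', hb'⟩ := hy a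
        exact ⟨b + b', by rw [add_smul, hb, hb', smul_add]⟩
      smul_mem' := fun r x hx a => by
        obtain ⟨b, hb⟩ := hx a
        exact ⟨r • b, by rw [smul_eq_mul, mul_smul, hb, smul_comm]⟩ }
  have hJ : ∀ w, Nonempty (NearDiag w (fun i => c * q i) φ) → w ∈ J := by
    rintro w ⟨E⟩ a
    refine ⟨E.u' fun i => q i * E.v a i, ?_⟩
    rw [← E.u'_u, ← map_smul]
    congr 1
    ext i : 1
    rw [E.u_apply, Pi.smul_apply, smul_eq_mul, mul_assoc]
  have htop : J = ⊤ := eq_top_of_monic_mem hf (hJ f ⟨D⟩) fun M h1 h2 => by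
    obtain ⟨w, hw, hE⟩ := hM M h1 h2
    exact ⟨w, hJ w hE, hw⟩
  have hone : ∀ a, ∃ b, φ a = c • b := fun a => by
    simpa using (htop ▸ Submodule.mem_top : (1 : R[X]) ∈ J) a
  choose φ₀ hφ₀ using hone
  refine ⟨⟨⟨φ₀, fun a b => hinj ?_⟩, fun r a => hinj ?_⟩, ?_⟩
  · simp [smul_add, ← hφ₀]
  · simp [smul_comm c r, ← hφ₀]
  · ext a
    simp [hφ₀]

/-- A map between torsion free modules over `R[X]`, `R` local, which becomes diagonal after
inverting a monic polynomial, and locally at the maximal ideals over that of `R`, is diagonal. -/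
theorem nonempty_nearDiag_one {p : R} (hp0 : p ≠ 0) (hpm : p ∈ IsLocalRing.maximalIdeal R) {l : ℕ}
    (s : Fin l → ℕ) (hs : Monotone s) {P Q : Type*} [AddCommGroup P] [Module R[X] P]
    [Module.IsTorsionFree R[X] P] [AddCommGroup Q] [Module R[X] Q] [Module.IsTorsionFree R[X] Q]
    (φ : P →ₗ[R[X]] Q) {f : R[X]} (hf : f.Monic) (D : NearDiag f (fun i => C p ^ s i) φ)
    (hM : ∀ M : Ideal R[X], M.IsMaximal → (IsLocalRing.maximalIdeal R).map C ≤ M →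
      ∃ w ∉ M, Nonempty (NearDiag w (fun i => C p ^ s i) φ)) :
    Nonempty (NearDiag 1 (fun i => C p ^ s i) φ) := by
  induction l generalizing P Q f with
  | zero =>
    have hP : ∀ a : P, a = 0 := fun a => by
      have := D.v'_v a
      rw [Subsingleton.elim (D.v a) 0, map_zero] at this
      exact (smul_eq_zero.1 this.symm).resolve_left hf.ne_zero
    have hQ : ∀ a : Q, a = 0 := fun a => by
      have := D.u'_u a
      rw [Subsingleton.elim (D.u a) 0, map_zero] at this
      exact (smul_eq_zero.1 this.symm).resolve_left hf.ne_zero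
    exact ⟨⟨0, 0, 0, 0, fun a => by simp [hP a], fun _ => Subsingleton.elim _ _,
      fun a => by simp [hQ a], fun _ => Subsingleton.elim _ _, fun _ i => i.elim0⟩⟩
  | succ l ih =>
    have hc : (C p ^ s 0 : R[X]) ≠ 0 := pow_ne_zero _ (C_ne_zero.2 hp0)
    have hq : (fun i => (C p ^ s i : R[X])) = fun i => C p ^ s 0 * C p ^ (s i - s 0) := by
      ext1 i
      rw [← pow_add, Nat.add_sub_cancel' (hs (Fin.zero_le i))]
    rw [hq] at D hM ⊢
    obtain ⟨φ, rfl⟩ := exists_eq_smul_of_nearDiag hc _ φ hf D hM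
    suffices H : Nonempty (NearDiag 1 (fun i => C p ^ (s i - s 0)) φ) from
      H.map fun D => D.smul (C p ^ s 0)
    replace D := NearDiag.ofSMul hc D
    replace hM := fun M h1 h2 => (hM M h1 h2).imp fun w hw => hw.imp_right
      (Nonempty.map (NearDiag.ofSMul hc))
    have hs' : Monotone fun i => s i - s 0 := fun a b hab => Nat.sub_le_sub_right (hs hab) _
    generalize hs'' : (fun i => s i - s 0) = s' at hs'
    have hs0' : s' 0 = 0 := by simp [← hs'']
    have hs'i : ∀ i, s i - s 0 = s' i := fun i => congrFun hs'' i
    simp only [hs'i] at D hM ⊢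
    let α : P →ₗ[R[X]] R[X] := (LinearMap.proj 0).comp D.v
    have hfα : f ∈ LinearMap.range α := ⟨D.v' (Pi.single 0 1), by simp [α, D.v_v']⟩
    obtain ⟨_, ⟨e, rfl⟩, hmonic, hdvd⟩ :=
      exists_monic_mem_map_dvd (I := LinearMap.range α) hf hfα
    have hloc : ∀ M : Ideal R[X], M.IsMaximal → (IsLocalRing.maximalIdeal R).map C ≤ M →
        ∃ w ∉ M, ∃ E : NearDiag w (fun i => C p ^ s' i) φ, ∃ i, s' i = 0 ∧ E.v e i ∉ M := by
      intro M h1 h2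
      obtain ⟨w, hw, ⟨E⟩⟩ := hM M h1 h2
      exact ⟨w, hw, E, exists_notMem_of_isMaximal hpm s' hs0' D hmonic
        (fun a => hdvd _ ⟨a, rfl⟩) h2 hw E⟩
    have htop : LinearMap.range (Module.Dual.eval R[X] Q (φ e)) = ⊤ := by
      refine eq_top_of_monic_mem hmonic ⟨(LinearMap.proj 0).comp D.u, ?_⟩ fun M h1 h2 => ?_
      · simp [D.u_apply, hs0', α]
      · obtain ⟨w, -, E, i, hi, hEi⟩ := hloc M h1 h2
        exact ⟨_, ⟨(LinearMap.proj i).comp E.u, rfl⟩, by simpa [E.u_apply, hi] using hEi⟩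
    obtain ⟨ψ, hψ⟩ := (htop ▸ Submodule.mem_top :
      (1 : R[X]) ∈ LinearMap.range (Module.Dual.eval R[X] Q (φ e)))
    have he : ψ (φ e) = 1 := hψ
    have hq0 : (C p ^ s' 0 : R[X]) = 1 := by simp [hs0']
    refine (ih (fun i => s' i.succ) (fun a b hab => hs' (Fin.succ_le_succ_iff.2 hab))
      (kerRestrict φ ψ) (hmonic.mul hf) (D.ker hq0 ψ e he) fun M h1 h2 => ?_).map
      (NearDiag.cons hq0 ψ e he)
    obtain ⟨w, hw, E, i, hi, hEi⟩ := hloc M h1 h2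
    have hσ : ∀ j, (C p ^ s' (Equiv.swap 0 i j) : R[X]) = C p ^ s' j := by
      intro j
      rcases eq_or_ne j 0 with rfl | hj0
      · simp [hi, hs0']
      · rcases eq_or_ne j i with rfl | hji
        · simp [hi, hs0']
        · rw [Equiv.swap_apply_of_ne_of_ne hj0 hji]
    refine ⟨_, ?_, ⟨(E.reindex (Equiv.swap 0 i) hσ).ker hq0 ψ e he⟩⟩
    have : (E.reindex (Equiv.swap 0 i) hσ).v e 0 = E.v e i := by
      simp [NearDiag.reindex, LinearMap.funLeft_apply]
    rw [this]
    exact fun h => (h1.isPrime.mem_or_mem h).elim hEi hw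

end Horrocks

section MatrixNearDiag

variable {S S' : Type*} [CommRing S] [CommRing S'] {l : ℕ}

/-- The matrix `F` becomes equivalent to the diagonal matrix with entries `q` after inverting
`w`. -/
def MatrixNearDiag (w : S) (q : Fin l → S) (F : Matrix (Fin l) (Fin l) S) : Prop :=
  ∃ u u' v v' : Matrix (Fin l) (Fin l) S, v' * v = w • 1 ∧ v * v' = w • 1 ∧ u' * u = w • 1 ∧
    u * u' = w • 1 ∧ u * F = Matrix.diagonal q * v

theorem MatrixNearDiag.map (θ : S →+* S') {w : S} {q : Fin l → S} {F : Matrix (Fin l) (Fin l) S}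
    (h : MatrixNearDiag w q F) : MatrixNearDiag (θ w) (fun i => θ (q i)) (F.map θ) := by
  obtain ⟨u, u', v, v', h1, h2, h3, h4, h5⟩ := h
  have hsm : (w • (1 : Matrix (Fin l) (Fin l) S)).map θ = θ w • 1 := by
    ext i j; simp [Matrix.one_apply, apply_ite θ]
  refine ⟨u.map θ, u'.map θ, v.map θ, v'.map θ, ?_, ?_, ?_, ?_, ?_⟩
  · rw [← Matrix.map_mul, h1, hsm]
  · rw [← Matrix.map_mul, h2, hsm]
  · rw [← Matrix.map_mul, h3, hsm]
  · rw [← Matrix.map_mul, h4, hsm]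
  · rw [← Matrix.map_mul, h5, Matrix.map_mul, Matrix.diagonal_map (map_zero θ)]

theorem MatrixNearDiag.nonempty_nearDiag {w : S} {q : Fin l → S} {F : Matrix (Fin l) (Fin l) S}
    (h : MatrixNearDiag w q F) : Nonempty (NearDiag w q F.mulVecLin) := by
  obtain ⟨u, u', v, v', h1, h2, h3, h4, h5⟩ := h
  refine ⟨⟨v.mulVecLin, v'.mulVecLin, u.mulVecLin, u'.mulVecLin, ?_, ?_, ?_, ?_, ?_⟩⟩
  · intro a; simp [h1, Matrix.smul_mulVec]
  · intro a; simp [h2, Matrix.smul_mulVec]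
  · intro a; simp [h3, Matrix.smul_mulVec]
  · intro a; simp [h4, Matrix.smul_mulVec]
  · intro a i
    simp only [Matrix.mulVecLin_apply, Matrix.mulVec_mulVec, h5]
    rw [← Matrix.mulVec_mulVec, Matrix.mulVec_diagonal]

theorem matrixEquiv_diagonal_of_nearDiag_one {q : Fin l → S} {F : Matrix (Fin l) (Fin l) S}
    (D : NearDiag 1 q F.mulVecLin) : MatrixEquiv F (Matrix.diagonal q) := by
  have hu : LinearMap.toMatrix' D.u' * LinearMap.toMatrix' D.u = 1 := by
    rw [← LinearMap.toMatrix'_comp, ← LinearMap.toMatrix'_id]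
    exact congrArg _ (LinearMap.ext fun a => by simp [D.u'_u])
  have hv : LinearMap.toMatrix' D.v' * LinearMap.toMatrix' D.v = 1 := by
    rw [← LinearMap.toMatrix'_comp, ← LinearMap.toMatrix'_id]
    exact congrArg _ (LinearMap.ext fun a => by simp [D.v'_v])
  refine ⟨LinearMap.toMatrix' D.u', LinearMap.toMatrix' D.v, ?_, ?_, ?_⟩
  · exact .of_mul_eq_one _ (by rw [← Matrix.det_mul, hu, Matrix.det_one])
  · exact .of_mul_eq_one_right _ (by rw [← Matrix.det_mul, hv, Matrix.det_one])
  · apply Matrix.toLin'.injective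
    rw [Matrix.toLin'_mul, Matrix.toLin'_mul, Matrix.toLin'_toMatrix', Matrix.toLin'_toMatrix']
    refine LinearMap.ext fun a => ?_
    have := D.u'_u (F.mulVecLin a)
    rw [one_smul] at this
    simp only [LinearMap.comp_apply, Matrix.toLin'_apply]
    rw [← Matrix.mulVecLin_apply, ← this]
    congr 1
    ext i : 1
    rw [D.u_apply, Matrix.mulVec_diagonal]

theorem exists_common_denominator (θ : S →+* S') (W : Submonoid S)
    (hW : ∀ z : S', ∃ w ∈ W, ∃ s, θ w * z = θ s) {ι : Type*} [Fintype ι] (z : ι → S') :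
    ∃ w ∈ W, ∃ s : ι → S, ∀ i, θ w * z i = θ (s i) := by
  classical
  choose w hw s hs using fun i => hW (z i)
  refine ⟨∏ i, w i, W.prod_mem fun i _ => hw i,
    fun i => (∏ j ∈ Finset.univ.erase i, w j) * s i, fun i => ?_⟩
  rw [← Finset.prod_erase_mul _ _ (Finset.mem_univ i), map_mul, mul_assoc, hs, map_mul]

theorem exists_matrixNearDiag_of_map (θ : S →+* S') (hθ : Function.Injective θ) (W : Submonoid S)
    (hW : ∀ z : S', ∃ w ∈ W, ∃ s, θ w * z = θ s) (q : Fin l → S) (F : Matrix (Fin l) (Fin l) S)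
    (h : MatrixEquiv (F.map θ) (Matrix.diagonal fun i => θ (q i))) :
    ∃ w ∈ W, MatrixNearDiag w q F := by
  obtain ⟨U, V, hU, hV, hUV⟩ := h
  obtain ⟨w, hw, t, ht⟩ := exists_common_denominator θ W hW
    fun x : (Fin 4 × Fin l × Fin l) => ![U⁻¹, U, V, V⁻¹] x.1 x.2.1 x.2.2
  let T : Fin 4 → Matrix (Fin l) (Fin l) S := fun k => Matrix.of fun i j => t (k, i, j)
  have hT : ∀ k, (T k).map θ = θ w • ![U⁻¹, U, V, V⁻¹] k := fun k => by
    ext i j; exact (ht (k, i, j)).symm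
  have hT0 : (T 0).map θ = θ w • U⁻¹ := hT 0
  have hT1 : (T 1).map θ = θ w • U := hT 1
  have hT2 : (T 2).map θ = θ w • V := hT 2
  have hT3 : (T 3).map θ = θ w • V⁻¹ := hT 3
  have hinj : Function.Injective fun M : Matrix (Fin l) (Fin l) S => M.map θ :=
    Matrix.map_injective hθ
  have hsm : ((w * w) • (1 : Matrix (Fin l) (Fin l) S)).map θ = (θ w * θ w) • 1 := by
    ext i j; simp [Matrix.one_apply, apply_ite θ]
  refine ⟨w * w, W.mul_mem hw hw, T 0, T 1, T 2, T 3, hinj ?_, hinj ?_, hinj ?_, hinj ?_, hinj ?_⟩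
  · simp [Matrix.map_mul, hT2, hT3, hsm, Matrix.nonsing_inv_mul _ hV, smul_smul]
  · simp [Matrix.map_mul, hT2, hT3, hsm, Matrix.mul_nonsing_inv _ hV, smul_smul]
  · simp [Matrix.map_mul, hT0, hT1, hsm, Matrix.mul_nonsing_inv _ hU, smul_smul]
  · simp [Matrix.map_mul, hT0, hT1, hsm, Matrix.nonsing_inv_mul _ hU, smul_smul]
  · simp only [Matrix.map_mul, hT0, hT2, hUV, Matrix.diagonal_map (map_zero θ)]
    rw [Matrix.smul_mul, ← Matrix.mul_assoc, ← Matrix.mul_assoc, Matrix.nonsing_inv_mul _ hU,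
      Matrix.one_mul, Matrix.mul_smul]

end MatrixNearDiag

section LocalHorrocks

variable {R : Type*} [CommRing R] [IsDomain R] [IsLocalRing R]

theorem matrixEquiv_diagonal_of_matrixNearDiag {p : R} (hp0 : p ≠ 0)
    (hpm : p ∈ IsLocalRing.maximalIdeal R) {l : ℕ} (s : Fin l → ℕ) (hs : Monotone s)
    (F : Matrix (Fin l) (Fin l) R[X])
    (hF : ∀ i ≤ l, Ideal.span (minorsSet i F) = Ideal.span {C p ^ initialSum s i})
    {f : R[X]} (hf : f.Monic) (hfF : MatrixNearDiag f (fun i => C p ^ s i) F) :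
    MatrixEquiv F (Matrix.diagonal fun i => C p ^ s i) := by
  obtain ⟨D⟩ := hfF.nonempty_nearDiag
  refine (nonempty_nearDiag_one hp0 hpm s hs F.mulVecLin hf D fun M hM _ => ?_).elim
    matrixEquiv_diagonal_of_nearDiag_one
  have hinj : Function.Injective (algebraMap R[X] (Localization.AtPrime M)) :=
    IsLocalization.injective _ M.primeCompl_le_nonZeroDivisors
  have hdom : IsDomain (Localization.AtPrime M) :=
    IsLocalization.isDomain_localization M.primeCompl_le_nonZeroDivisors
  have hMF := matrixEquiv_diagonal_of_hasUnitPivots (hasUnitPivots_of_isLocalRing)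
    (p := algebraMap R[X] (Localization.AtPrime M) (C p))
    (by rw [Ne, map_eq_zero_iff _ hinj, C_eq_zero]; exact hp0) s hs
    (F.map (algebraMap R[X] (Localization.AtPrime M))) fun i hi => by
      rw [span_minorsSet_map, hF i hi, Ideal.map_span, Set.image_singleton, map_pow]
  obtain ⟨w, hw, h⟩ := exists_matrixNearDiag_of_map _ hinj M.primeCompl (fun z => by
    obtain ⟨⟨a, w⟩, h⟩ := IsLocalization.surj M.primeCompl z
    exact ⟨w, w.2, a, by rw [← h, mul_comm]⟩) (fun i => C p ^ s i) F (by simpa using hMF)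
  exact ⟨w, hw, h.nonempty_nearDiag⟩

end LocalHorrocks

section Patching

variable {A L : Type*} [CommRing A] [CommRing L]

/-- The substitution `X ↦ X + b Y`. -/
noncomputable def shiftHom (b : A) : A[X] →+* A[X][X] :=
  eval₂RingHom (C.comp C) (C X + C (C b) * X)

/-- The substitution `Y ↦ r Y`. -/
noncomputable def scaleHom (r : A) : A[X][X] →+* A[X][X] :=
  eval₂RingHom C (C (C r) * X)

@[simp] theorem shiftHom_C (b a : A) : shiftHom b (C a) = C (C a) := by simp [shiftHom]

@[simp] theorem shiftHom_X (b : A) : shiftHom b X = C X + C (C b) * X := by simp [shiftHom]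

@[simp] theorem scaleHom_C (r : A) (a : A[X]) : scaleHom r (C a) = C a := by simp [scaleHom]

@[simp] theorem scaleHom_X (r : A) : scaleHom r X = C (C r) * X := by simp [scaleHom]

theorem shiftHom_zero : shiftHom (0 : A) = C :=
  Polynomial.ringHom_ext (by simp) (by simp)

theorem scaleHom_comp_shiftHom (r b : A) : (scaleHom r).comp (shiftHom b) = shiftHom (r * b) :=
  Polynomial.ringHom_ext (by simp) (by simp; ring)

theorem eval₂RingHom_shiftHom_comp_shiftHom (b c : A) :
    (eval₂RingHom (shiftHom b) X).comp (shiftHom c) = shiftHom (b + c) :=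
  Polynomial.ringHom_ext (by simp) (by simp; ring)

theorem mapRingHom_comp_shiftHom (ι : A →+* L) (b : A) :
    (mapRingHom (mapRingHom ι)).comp (shiftHom b) = (shiftHom (ι b)).comp (mapRingHom ι) :=
  Polynomial.ringHom_ext (by simp) (by simp)

theorem mapRingHom_comp_scaleHom (ι : A →+* L) (r : A) :
    (mapRingHom (mapRingHom ι)).comp (scaleHom r) =
      (scaleHom (ι r)).comp (mapRingHom (mapRingHom ι)) :=
  Polynomial.ringHom_ext (by simp) (by simp)

theorem evalRingHom_zero_comp_shiftHom (b : A) :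
    (evalRingHom (0 : A[X])).comp (shiftHom b) = RingHom.id _ :=
  Polynomial.ringHom_ext (by simp) (by simp)

/-- The polynomials whose denominators are cleared by the substitutions `Y ↦ c Y`, for all
multiples `c` of some element of `W`. -/
def scaleGood (W : Submonoid A) (ι : A →+* L) : Subring L[X][X] where
  carrier := {z | ∃ b ∈ W, ∀ c, b ∣ c → scaleHom (ι c) z ∈ (mapRingHom (mapRingHom ι)).range}
  zero_mem' := ⟨1, W.one_mem, fun c _ => by simp⟩
  one_mem' := ⟨1, W.one_mem, fun c _ => by rw [map_one]; exact Subring.one_mem _⟩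
  add_mem' := by
    rintro x y ⟨b, hb, hx⟩ ⟨b', hb', hy⟩
    refine ⟨b * b', W.mul_mem hb hb', fun c hc => ?_⟩
    rw [map_add]
    exact Subring.add_mem _ (hx c (dvd_of_mul_right_dvd hc)) (hy c (dvd_of_mul_left_dvd hc))
  mul_mem' := by
    rintro x y ⟨b, hb, hx⟩ ⟨b', hb', hy⟩
    refine ⟨b * b', W.mul_mem hb hb', fun c hc => ?_⟩
    rw [map_mul]
    exact Subring.mul_mem _ (hx c (dvd_of_mul_right_dvd hc)) (hy c (dvd_of_mul_left_dvd hc))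
  neg_mem' := by
    rintro x ⟨b, hb, hx⟩
    refine ⟨b, hb, fun c hc => ?_⟩
    rw [map_neg]
    exact Subring.neg_mem _ (hx c hc)

theorem map_mem_scaleGood (W : Submonoid A) (ι : A →+* L) (z : A[X][X]) :
    mapRingHom (mapRingHom ι) z ∈ scaleGood W ι :=
  ⟨1, W.one_mem, fun c _ => ⟨scaleHom c z, RingHom.congr_fun (mapRingHom_comp_scaleHom ι c) z⟩⟩

theorem mem_scaleGood (W : Submonoid A) [Algebra A L] [IsLocalization W L] {z : L[X][X]}
    (hz : z.coeff 0 ∈ (mapRingHom (algebraMap A L)).range) : z ∈ scaleGood W (algebraMap A L) := by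
  have hX : (X : L[X][X]) ∈ scaleGood W (algebraMap A L) := by
    simpa using map_mem_scaleGood W (algebraMap A L) X
  have hCX : ∀ r : L[X], C r * X ∈ scaleGood W (algebraMap A L) := by
    intro r
    obtain ⟨b, hbW, hb⟩ := IsLocalization.integerNormalization_spec W r
    refine ⟨b, hbW, ?_⟩
    rintro _ ⟨c, rfl⟩
    refine ⟨C (IsLocalization.integerNormalization W r * C c) * X, ?_⟩
    have hb' : (IsLocalization.integerNormalization W r).map (algebraMap A L) =
        C (algebraMap A L b) * r := by
      rw [hb, ← algebraMap_smul L, smul_eq_C_mul]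
    simp only [map_mul, coe_mapRingHom, map_C, map_X, hb', scaleHom_C,
      scaleHom_X]
    ring
  have hmul : ∀ y : L[X][X], y * X ∈ scaleGood W (algebraMap A L) := by
    intro y
    induction y using Polynomial.induction_on' with
    | add p q hp hq => rw [add_mul]; exact Subring.add_mem _ hp hq
    | monomial n r =>
      rw [← C_mul_X_pow_eq_monomial, mul_assoc, mul_comm (X ^ n), ← mul_assoc]
      exact Subring.mul_mem _ (hCX r) (Subring.pow_mem _ hX n)
  rw [← divX_mul_X_add z]
  refine Subring.add_mem _ (hmul _) ?_
  obtain ⟨a, ha⟩ := hz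
  rw [← ha]
  simpa using map_mem_scaleGood W (algebraMap A L) (C a)

theorem matrix_map_comp {R S T : Type*} [CommRing R] [CommRing S] [CommRing T] {l m : ℕ}
    (F : Matrix (Fin l) (Fin m) R) (f : R →+* S) (g : S →+* T) :
    (F.map f).map g = F.map (g.comp f) := rfl

/-- The elements `b` for which `F(X + b Y)` is equivalent to `F(X)`. -/
def shiftIdeal {l : ℕ} (F : Matrix (Fin l) (Fin l) A[X]) : Ideal A where
  carrier := {b | MatrixEquiv (F.map (shiftHom b)) (F.map (C : A[X] →+* A[X][X]))}
  zero_mem' := by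
    rw [Set.mem_ofPred_eq, shiftHom_zero]
    exact .refl _
  add_mem' {b c} hb hc := by
    have h := MatrixEquiv.map (eval₂RingHom (shiftHom b) X) hc
    rw [matrix_map_comp, matrix_map_comp, eval₂RingHom_shiftHom_comp_shiftHom,
      show (eval₂RingHom (shiftHom b) X).comp C = shiftHom b from RingHom.ext fun _ => by simp] at h
    exact h.trans hb
  smul_mem' r b hb := by
    have h := MatrixEquiv.map (scaleHom r) hb
    rwa [matrix_map_comp, matrix_map_comp, scaleHom_comp_shiftHom,
      show (scaleHom r).comp C = C from RingHom.ext fun _ => by simp] at h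

theorem matrix_map_eq_of_map_eq {S T : Type*} [CommRing S] [CommRing T] {l : ℕ}
    (σ κ : S →+* T) {F D U Ui V Vi : Matrix (Fin l) (Fin l) S} (hU : Ui * U = 1)
    (hV : V * Vi = 1) (hF : F = U * D * V) (hD : D.map κ = D.map σ) :
    F.map σ = U.map σ * Ui.map κ * F.map κ * (Vi.map κ * V.map σ) := by
  have h : Ui.map κ * F.map κ * Vi.map κ = D.map κ := by
    rw [← Matrix.map_mul, ← Matrix.map_mul, hF, Matrix.mul_assoc, Matrix.mul_assoc, hV,
      Matrix.mul_one, ← Matrix.mul_assoc, hU, Matrix.one_mul]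
  calc F.map σ = U.map σ * D.map σ * V.map σ := by rw [hF, Matrix.map_mul, Matrix.map_mul]
    _ = _ := by rw [← hD, ← h]; simp only [Matrix.mul_assoc]

theorem exists_mem_shiftIdeal {l : ℕ} (F : Matrix (Fin l) (Fin l) A[X]) (W : Submonoid A)
    [Algebra A L] [IsLocalization W L] (hinj : Function.Injective (algebraMap A L))
    (D : Matrix (Fin l) (Fin l) L)
    (h : MatrixEquiv (F.map (mapRingHom (algebraMap A L))) (D.map C)) :
    ∃ b ∈ W, b ∈ shiftIdeal F := by
  let ι := algebraMap A L
  obtain ⟨U, V, hU, hV, hUV⟩ := h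
  let σ : L[X] →+* L[X][X] := shiftHom 1
  let κ : L[X] →+* L[X][X] := C
  have hUi : U * U⁻¹ = 1 := Matrix.mul_nonsing_inv _ hU
  have hUi' : U⁻¹ * U = 1 := Matrix.nonsing_inv_mul _ hU
  have hVi : V * V⁻¹ = 1 := Matrix.mul_nonsing_inv _ hV
  have hVi' : V⁻¹ * V = 1 := Matrix.nonsing_inv_mul _ hV
  have hmap1 : ∀ τ : L[X] →+* L[X][X], ∀ M N : Matrix (Fin l) (Fin l) L[X], M * N = 1 →
      M.map τ * N.map τ = 1 := fun τ M N h => by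
    rw [← Matrix.map_mul, h, Matrix.map_one _ (map_zero τ) (map_one τ)]
  let G : Fin 4 → Matrix (Fin l) (Fin l) L[X][X] :=
    ![U.map σ * (U⁻¹).map κ, U.map κ * (U⁻¹).map σ, (V⁻¹).map κ * V.map σ,
      (V⁻¹).map σ * V.map κ]
  have hev : ∀ τ : L[X] →+* L[X][X], ((evalRingHom 0).comp τ = RingHom.id _) →
      ∀ M : Matrix (Fin l) (Fin l) L[X], (M.map τ).map (evalRingHom 0) = M := fun τ h M => by
    rw [matrix_map_comp, h]; ext i j; simp
  have hσ := hev σ (evalRingHom_zero_comp_shiftHom 1)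
  have hκ := hev κ (RingHom.ext fun _ => by simp [κ])
  have hGev : ∀ k, (G k).map (evalRingHom 0) = 1 := by
    intro k
    fin_cases k
    · simp only [G, Fin.zero_eta, Matrix.cons_val_zero, Matrix.map_mul, hσ, hκ, hUi]
    · exact (Matrix.map_mul (f := evalRingHom (0 : L[X]))).trans (by rw [hσ, hκ, hUi])
    · exact (Matrix.map_mul (f := evalRingHom (0 : L[X]))).trans (by rw [hσ, hκ, hVi'])
    · exact (Matrix.map_mul (f := evalRingHom (0 : L[X]))).trans (by rw [hσ, hκ, hVi'])
  have hgood : ∀ x : Fin 4 × Fin l × Fin l, G x.1 x.2.1 x.2.2 ∈ scaleGood W ι := by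
    rintro ⟨k, i, j⟩
    apply mem_scaleGood
    have : (G k i j).coeff 0 = (1 : Matrix (Fin l) (Fin l) L[X]) i j := by
      rw [coeff_zero_eq_eval_zero, ← hGev k]; rfl
    rw [this, Matrix.one_apply]
    split_ifs
    · exact Subring.one_mem _
    · exact Subring.zero_mem _
  choose b hbW hb using hgood
  have hbmem : ∏ x, b x ∈ W := W.prod_mem fun x _ => hbW x
  refine ⟨∏ x, b x, hbmem, ?_⟩
  generalize hc : ∏ x, b x = c
  have hG : ∀ k, ∃ M : Matrix (Fin l) (Fin l) A[X][X],
      M.map (mapRingHom (mapRingHom ι)) = (G k).map (scaleHom (ι c)) := by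
    intro k
    choose M hM using fun i j => hb (k, i, j) c
      (hc ▸ Finset.dvd_prod_of_mem _ (Finset.mem_univ _))
    exact ⟨Matrix.of M, by ext1 i j; exact hM i j⟩
  choose M hM using hG
  have hinj' : Function.Injective fun N : Matrix (Fin l) (Fin l) A[X][X] =>
      N.map (mapRingHom (mapRingHom ι)) :=
    Matrix.map_injective (Polynomial.map_injective _ (Polynomial.map_injective _ hinj))
  have hM1 : ∀ i j, G i * G j = 1 → IsUnit (M i).det := fun i j hij => by
    refine .of_mul_eq_one (M j).det ?_
    rw [← Matrix.det_mul]
    have : M i * M j = 1 := hinj' (by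
      simp only [Matrix.map_mul, hM]
      rw [← Matrix.map_mul, hij]
      simp)
    rw [this, Matrix.det_one]
  refine ⟨M 0, M 2, hM1 0 1 ?_, hM1 2 3 ?_, hinj' ?_⟩
  · change U.map σ * (U⁻¹).map κ * (U.map κ * (U⁻¹).map σ) = 1
    rw [Matrix.mul_assoc, ← Matrix.mul_assoc ((U⁻¹).map κ), hmap1 _ _ _ hUi', Matrix.one_mul,
      hmap1 _ _ _ hUi]
  · change (V⁻¹).map κ * V.map σ * ((V⁻¹).map σ * V.map κ) = 1
    rw [Matrix.mul_assoc, ← Matrix.mul_assoc (V.map σ), hmap1 _ _ _ hVi, Matrix.one_mul,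
      hmap1 _ _ _ hVi']
  · have h1 : (F.map (mapRingHom ι)).map σ = G 0 * (F.map (mapRingHom ι)).map κ * G 2 := by
      exact matrix_map_eq_of_map_eq σ κ hUi' hVi hUV (by ext1 i j; simp [κ, σ])
    have h3 := congrArg (fun N : Matrix (Fin l) (Fin l) L[X][X] => N.map (scaleHom (ι c))) h1
    simp only [Matrix.map_mul, ← hM] at h3
    simp only [Matrix.map_mul]
    rw [matrix_map_comp, matrix_map_comp] at h3 ⊢
    rw [mapRingHom_comp_shiftHom]
    rw [matrix_map_comp, scaleHom_comp_shiftHom, mul_one,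
      matrix_map_comp] at h3
    rw [h3]
    congr 3
    refine funext fun x => ?_
    simp [κ]

/-- A matrix over `A[X]` which is locally equivalent to a constant matrix is equivalent to its
constant term. -/
theorem matrixEquiv_map_C_eval_zero [IsDomain A] {l : ℕ} (F : Matrix (Fin l) (Fin l) A[X])
    (D : Matrix (Fin l) (Fin l) A)
    (h : ∀ (m : Ideal A) [m.IsMaximal],
      MatrixEquiv (F.map (mapRingHom (algebraMap A (Localization.AtPrime m))))
        ((D.map (algebraMap A (Localization.AtPrime m))).map C)) :
    MatrixEquiv F ((F.map (evalRingHom 0)).map C) := by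
  have htop : shiftIdeal F = ⊤ := by
    by_contra hne
    obtain ⟨m, hm, hle⟩ := Ideal.exists_le_maximal _ hne
    obtain ⟨b, hbm, hb⟩ := exists_mem_shiftIdeal F m.primeCompl
      (IsLocalization.injective (Localization.AtPrime m) m.primeCompl_le_nonZeroDivisors) _ (h m)
    exact hbm (hle hb)
  have h1 : MatrixEquiv (F.map (shiftHom 1)) (F.map C) :=
    (htop ▸ Submodule.mem_top : (1 : A) ∈ shiftIdeal F)
  have h2 := h1.map (eval₂RingHom (C.comp (evalRingHom 0)) X : A[X][X] →+* A[X])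
  rw [matrix_map_comp, matrix_map_comp,
    show (eval₂RingHom (C.comp (evalRingHom 0)) X : A[X][X] →+* A[X]).comp (shiftHom 1) =
      RingHom.id _ from Polynomial.ringHom_ext (by simp) (by simp),
    show (eval₂RingHom (C.comp (evalRingHom 0)) X : A[X][X] →+* A[X]).comp C =
      C.comp (evalRingHom 0) from RingHom.ext fun _ => by simp, ← matrix_map_comp] at h2
  convert h2 using 1
  ext i j
  simp

end Patching

section Induction

/-- The ideals of minors of `F` are those of the diagonal matrix with entries `p ^ s i`. -/
def HasDiagonalMinors {S : Type*} [CommRing S] {l : ℕ} (p : S) (s : Fin l → ℕ)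
    (F : Matrix (Fin l) (Fin l) S) : Prop :=
  ∀ i ≤ l, Ideal.span (minorsSet i F) = Ideal.span {p ^ initialSum s i}

theorem HasDiagonalMinors.map {S S' : Type*} [CommRing S] [CommRing S'] {l : ℕ} {p : S}
    {s : Fin l → ℕ} {F : Matrix (Fin l) (Fin l) S} (h : HasDiagonalMinors p s F) (θ : S →+* S') :
    HasDiagonalMinors (θ p) s (F.map θ) := fun i hi => by
  rw [span_minorsSet_map, h i hi, Ideal.map_span, Set.image_singleton, map_pow]

theorem span_minorsSet_self_le {S : Type*} [CommRing S] {l : ℕ} (F : Matrix (Fin l) (Fin l) S) :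
    Ideal.span (minorsSet l F) ≤ Ideal.span {F.det} := by
  rw [Ideal.span_le]
  have hid : ∀ f : Fin l → Fin l, StrictMono f → f = id := fun f hf =>
    congrArg DFunLike.coe (Subsingleton.elim
      (hf.orderIsoOfSurjective f (Finite.injective_iff_surjective.1 hf.injective))
      (OrderIso.refl _))
  rintro _ ⟨f, g, hf, hg, rfl⟩
  rw [hid f hf, hid g hg, Matrix.submatrix_id_id]
  exact Ideal.mem_span_singleton_self _

theorem HasDiagonalMinors.matrixEquiv_of_isUnit {S : Type*} [CommRing S] {l : ℕ} {p : S}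
    {s : Fin l → ℕ} {F : Matrix (Fin l) (Fin l) S} (h : HasDiagonalMinors p s F) (hp : IsUnit p) :
    MatrixEquiv F (Matrix.diagonal fun i => p ^ s i) := by
  have hF : IsUnit F.det := by
    rw [← Ideal.span_singleton_eq_top, ← top_le_iff]
    refine le_trans ?_ (span_minorsSet_self_le F)
    rw [h l le_rfl, Ideal.span_singleton_eq_top.2 (hp.pow _)]
  have hD : IsUnit (Matrix.diagonal fun i => p ^ s i).det := by
    rw [Matrix.det_diagonal, Finset.prod_pow_eq_pow_sum]
    exact hp.pow _
  have h1 := MatrixEquiv.mul_left (F := (1 : Matrix (Fin l) (Fin l) S)) hF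
  have h2 := MatrixEquiv.mul_left (F := (1 : Matrix (Fin l) (Fin l) S)) hD
  rw [mul_one] at h1 h2
  exact h1.trans h2.symm

theorem HasDiagonalMinors.matrixEquiv_of_ringEquiv {S S' : Type*} [CommRing S] [CommRing S']
    {l : ℕ} {p : S} {s : Fin l → ℕ} {F : Matrix (Fin l) (Fin l) S} (e : S ≃+* S')
    (h : HasDiagonalMinors p s F)
    (he : HasDiagonalMinors (e p) s (F.map e) →
      MatrixEquiv (F.map e) (Matrix.diagonal fun i => e p ^ s i)) :
    MatrixEquiv F (Matrix.diagonal fun i => p ^ s i) := by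
  rw [← MatrixEquiv.map_iff_of_ringEquiv e, Matrix.diagonal_map (map_zero e)]
  simpa only [Function.comp_def, map_pow] using he (h.map (e : S →+* S'))

theorem HasDiagonalMinors.matrixEquiv_map_C_eval_zero {R : Type*} [CommRing R] [IsDomain R]
    {p : R} (hp : p ≠ 0) {l : ℕ} {s : Fin l → ℕ} (hs : Monotone s)
    {F : Matrix (Fin l) (Fin l) R[X]} (h : HasDiagonalMinors (C p) s F) {w : R[X]} (hw : w.Monic)
    (hnear : MatrixNearDiag w (fun i => C p ^ s i) F) :
    MatrixEquiv F ((F.map (evalRingHom 0)).map C) := by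
  refine _root_.matrixEquiv_map_C_eval_zero F (Matrix.diagonal fun i => p ^ s i) fun m hm => ?_
  set ι := algebraMap R (Localization.AtPrime m)
  have hinj : Function.Injective ι :=
    IsLocalization.injective (Localization.AtPrime m) m.primeCompl_le_nonZeroDivisors
  have hdom : IsDomain (Localization.AtPrime m) :=
    IsLocalization.isDomain_localization m.primeCompl_le_nonZeroDivisors
  have hloc := h.map (mapRingHom ι)
  have hnear' := hnear.map (mapRingHom ι)
  rw [Matrix.diagonal_map (map_zero _), Matrix.diagonal_map (map_zero _)]
  simp only [map_pow, coe_mapRingHom, map_C] at hloc hnear' ⊢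
  by_cases hpm : ι p ∈ IsLocalRing.maximalIdeal (Localization.AtPrime m)
  · exact matrixEquiv_diagonal_of_matrixNearDiag ((map_ne_zero_iff _ hinj).2 hp) hpm s hs _ hloc
      (hw.map ι) hnear'
  · refine hloc.matrixEquiv_of_isUnit (IsUnit.map C ?_)
    simpa using hpm

variable {K : Type*} [Field K] (n : ℕ)

/-- The inclusion of `K[t]` into the ring of polynomials in the further variable `t`. -/
noncomputable def lastVar : K[X] →+* (MvPolynomial (Fin n) K[X])[X] :=
  mapRingHom (MvPolynomial.C.comp C)

/-- Move the last variable `t` to the coefficients. -/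
noncomputable def moveLast : (MvPolynomial (Fin n) K[X])[X] →+* MvPolynomial (Fin n) K[X][X] :=
  eval₂RingHom (MvPolynomial.map (mapRingHom C)) (MvPolynomial.C (C X))

theorem moveLast_injective : Function.Injective (moveLast (K := K) n) := by
  let g : MvPolynomial (Fin n) K[X][X] →+* (MvPolynomial (Fin n) K[X])[X] :=
    MvPolynomial.eval₂Hom (eval₂RingHom (lastVar n) (C (MvPolynomial.C X)))
      fun i => C (MvPolynomial.X i)
  have h : g.comp (moveLast n) = RingHom.id _ := by
    refine Polynomial.ringHom_ext' (MvPolynomial.ringHom_ext' (Polynomial.ringHom_ext' ?_ ?_) ?_) ?_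
    · ext a; simp [g, moveLast, lastVar]
    · simp [g, moveLast, lastVar]
    · intro i; simp [g, moveLast]
    · simp [g, moveLast, lastVar]
  exact Function.LeftInverse.injective (g := g) fun x => RingHom.congr_fun h x

/-- Make the last variable `t` a part of the field of constants. -/
noncomputable def constLast :
    (MvPolynomial (Fin n) K[X])[X] →+* MvPolynomial (Fin n) (RatFunc K)[X] :=
  (MvPolynomial.map (mapRingHom (algebraMap K[X] (RatFunc K)))).comp (moveLast n)

theorem constLast_injective : Function.Injective (constLast (K := K) n) :=
  (MvPolynomial.map_injective _ (Polynomial.map_injective _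
    (RatFunc.algebraMap_injective K))).comp (moveLast_injective n)

theorem constLast_lastVar (a : K[X]) :
    constLast n (lastVar n a) = MvPolynomial.C (C (algebraMap K[X] (RatFunc K) a)) := by
  have : (constLast n).comp (lastVar n) =
      MvPolynomial.C.comp (C.comp (algebraMap K[X] (RatFunc K))) := by
    refine Polynomial.ringHom_ext' ?_ ?_
    · ext a; simp [constLast, moveLast, lastVar]
    · simp [constLast, moveLast, lastVar]
  exact RingHom.congr_fun this a

theorem constLast_C_C (p : K[X]) : constLast n (C (MvPolynomial.C p)) =
    MvPolynomial.C (p.map ((algebraMap K[X] (RatFunc K)).comp C)) := by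
  simp [constLast, moveLast, Polynomial.map_map]

/-- The monic polynomials. -/
def monicSubmonoid (K : Type*) [Field K] : Submonoid K[X] where
  carrier := {w | w.Monic}
  one_mem' := monic_one
  mul_mem' := Monic.mul

theorem exists_constLast_mul_eq (z : MvPolynomial (Fin n) (RatFunc K)[X]) :
    ∃ w ∈ (monicSubmonoid K).map (lastVar n), ∃ a, constLast n w * z = constLast n a := by
  set W := (monicSubmonoid K).map (lastVar n)
  have himg : ∀ b, ∃ w ∈ W, ∃ a, constLast n w * constLast n b = constLast n a := fun b =>
    ⟨1, W.one_mem, b, by simp⟩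
  have hadd : ∀ z z', (∃ w ∈ W, ∃ a, constLast n w * z = constLast n a) →
      (∃ w ∈ W, ∃ a, constLast n w * z' = constLast n a) →
      ∃ w ∈ W, ∃ a, constLast n w * (z + z') = constLast n a := by
    rintro z z' ⟨w, hw, a, ha⟩ ⟨w', hw', a', ha'⟩
    refine ⟨w * w', W.mul_mem hw hw', w' * a + w * a', ?_⟩
    simp only [map_add, map_mul, ← ha, ← ha']
    ring
  have hmul : ∀ z z', (∃ w ∈ W, ∃ a, constLast n w * z = constLast n a) →
      (∃ w ∈ W, ∃ a, constLast n w * z' = constLast n a) →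
      ∃ w ∈ W, ∃ a, constLast n w * (z * z') = constLast n a := by
    rintro z z' ⟨w, hw, a, ha⟩ ⟨w', hw', a', ha'⟩
    refine ⟨w * w', W.mul_mem hw hw', a * a', ?_⟩
    simp only [map_mul, ← ha, ← ha']
    ring
  have hX : ∃ w ∈ W, ∃ a, constLast n w * MvPolynomial.C X = constLast n a := by
    simpa [constLast, moveLast] using himg (C (MvPolynomial.C X))
  induction z using MvPolynomial.induction_on with
  | C q =>
    induction q using Polynomial.induction_on with
    | C r =>
      refine ⟨lastVar n r.denom, ⟨_, r.monic_denom, rfl⟩, lastVar n r.num, ?_⟩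
      rw [constLast_lastVar, constLast_lastVar, ← map_mul, ← map_mul]
      congr 2
      rw [mul_comm, ← eq_div_iff (RatFunc.algebraMap_ne_zero r.denom_ne_zero),
        RatFunc.num_div_denom]
    | add q q' hq hq' => rw [map_add]; exact hadd _ _ hq hq'
    | monomial k r h => rw [pow_succ, ← mul_assoc, map_mul]; exact hmul _ _ h hX
  | add z z' hz hz' => exact hadd _ _ hz hz'
  | mul_X z i hz =>
    refine hmul _ _ hz ?_
    simpa [constLast, moveLast] using himg (C (MvPolynomial.X i))

end Induction

theorem HasDiagonalMinors.matrixEquiv_diagonal.{u} (n : ℕ) {K : Type u} [Field K] {p : K[X]}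
    (hp : p ≠ 0) {l : ℕ} {s : Fin l → ℕ} (hs : Monotone s)
    {F : Matrix (Fin l) (Fin l) (MvPolynomial (Fin n) K[X])}
    (hF : HasDiagonalMinors (MvPolynomial.C p) s F) :
    MatrixEquiv F (Matrix.diagonal fun i => MvPolynomial.C p ^ s i) := by
  induction n generalizing K with
  | zero =>
    refine hF.matrixEquiv_of_ringEquiv (MvPolynomial.isEmptyRingEquiv K[X] (Fin 0)) fun h => ?_
    refine matrixEquiv_diagonal_of_hasUnitPivots hasUnitPivots_of_euclideanDomain ?_ s hs _ h
    exact (map_ne_zero_iff _ (RingEquiv.injective _)).2 (MvPolynomial.C_ne_zero.2 hp)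
  | succ n ih =>
    refine hF.matrixEquiv_of_ringEquiv (S' := (MvPolynomial (Fin n) K[X])[X])
      (MvPolynomial.finSuccEquiv K[X] n).toRingEquiv fun h => ?_
    generalize F.map (MvPolynomial.finSuccEquiv K[X] n).toRingEquiv = F at h
    rw [show (MvPolynomial.finSuccEquiv K[X] n).toRingEquiv (MvPolynomial.C p) =
      C (MvPolynomial.C p) from (MvPolynomial.finSuccEquiv K[X] n).commutes p] at h ⊢
    have hdiag : (Matrix.diagonal fun i => (C (MvPolynomial.C p) ^ s i :
        (MvPolynomial (Fin n) K[X])[X])) = (Matrix.diagonal fun i => MvPolynomial.C p ^ s i).map C := by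
      rw [Matrix.diagonal_map (map_zero C)]; simp
    have hconst := ih (K := RatFunc K) (p := p.map ((algebraMap K[X] (RatFunc K)).comp C))
      ((Polynomial.map_ne_zero_iff (RingHom.injective _)).2 hp)
      (F := F.map (constLast n)) (by simpa only [constLast_C_C] using h.map (constLast n))
    obtain ⟨_, ⟨w, hw, rfl⟩, hnear⟩ := exists_matrixNearDiag_of_map (constLast n)
      (constLast_injective n) _ (exists_constLast_mul_eq n)
      (fun i => C (MvPolynomial.C p) ^ s i) F (by simpa only [map_pow, constLast_C_C] using hconst)
    have hw' : (lastVar n w).Monic := Monic.map _ hw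
    have hpatch := h.matrixEquiv_map_C_eval_zero (MvPolynomial.C_ne_zero.2 hp) hs hw' hnear
    refine hpatch.trans ?_
    rw [hdiag]
    refine MatrixEquiv.map C (ih hp ?_)
    simpa using h.map (evalRingHom 0)

theorem sum_Iic_eq_initialSum {l : ℕ} (s : Fin l → ℕ) (i : Fin l) :
    ∑ j ∈ Finset.Iic i, s j = initialSum s (i + 1) := by
  rw [initialSum, ← Finset.sum_filter]
  refine Finset.sum_congr (Finset.ext fun j => ?_) fun _ _ => rfl
  rw [Finset.mem_Iic, Finset.mem_filter_univ, Fin.le_def, Nat.lt_succ_iff]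

theorem pow_initialSum_mem_span_minorsSet_diagonal {S : Type*} [CommRing S] {l : ℕ} (p : S)
    (s : Fin l → ℕ) {i : ℕ} (hi : i ≤ l) :
    p ^ initialSum s i ∈ Ideal.span (minorsSet i (Matrix.diagonal fun j => p ^ s j)) := by
  have h := det_submatrix_mem_span_minorsSet (Matrix.diagonal fun j => p ^ s j)
    (Fin.castLE hi) (Fin.castLE hi)
  rw [Matrix.submatrix_diagonal _ _ (Fin.castLE_injective hi), Matrix.det_diagonal] at h
  have hsum : initialSum s i = ∑ j : Fin i, s (Fin.castLE hi j) := by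
    rw [initialSum, ← Finset.sum_filter]
    refine (Finset.sum_congr (Finset.ext fun j => ?_) fun _ _ => rfl).trans
      (Finset.sum_map Finset.univ (Fin.castLEEmb hi) s)
    simp only [Finset.mem_filter, Finset.mem_univ, true_and, Finset.mem_map, Fin.castLEEmb_apply]
    exact ⟨fun h => ⟨⟨j, h⟩, rfl⟩, fun ⟨a, ha⟩ => ha ▸ a.2⟩
  rw [hsum, ← Finset.prod_pow_eq_pow_sum]
  exact h

theorem span_eq_span_singleton_mul_of_forall_dvd {S : Type*} [CommRing S] {d : S} {T : Set S}
    (h : ∀ a ∈ T, d ∣ a) : Ideal.span T = Ideal.span {d} * Ideal.span {b | d * b ∈ T} := by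
  rw [Ideal.span_mul_span', Set.singleton_mul]
  congr 1
  ext a
  constructor
  · intro ha
    obtain ⟨b, rfl⟩ := h a ha
    exact ⟨b, ha, rfl⟩
  · rintro ⟨b, hb, rfl⟩
    exact hb

theorem span_eq_of_isGcdOf {S : Type*} [CommRing S] {d d' : S} {T : Set S} (h : IsGcdOf d T)
    (h' : IsGcdOf d' T) (hd : Ideal.span {b | d * b ∈ T} = ⊤) :
    Ideal.span T = Ideal.span {d'} := by
  rw [span_eq_span_singleton_mul_of_forall_dvd h.1, hd, Ideal.mul_top]
  exact le_antisymm (Ideal.span_singleton_le_span_singleton.2 (h.2 _ h'.1))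
    (Ideal.span_singleton_le_span_singleton.2 (h'.2 _ h.1))

theorem span_minorsSet_zero {S : Type*} [CommRing S] {l m : ℕ} (F : Matrix (Fin l) (Fin m) S) :
    Ideal.span (minorsSet 0 F) = ⊤ :=
  (Ideal.eq_top_iff_one _).2 (by
    simpa using det_submatrix_mem_span_minorsSet F (Fin.elim0 : Fin 0 → _) Fin.elim0)

/-- Take the polynomials in the first variable as the coefficients. -/
noncomputable def firstVarEquiv (K : Type*) [Field K] (n : ℕ) :
    MvPolynomial (Fin (n + 1)) K ≃ₐ[K] MvPolynomial (Fin n) K[X] :=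
  (MvPolynomial.renameEquiv K (finSuccEquiv n)).trans (MvPolynomial.optionEquivRight K (Fin n))

theorem firstVarEquiv_polyImage {K : Type*} [Field K] (n : ℕ) (p : K[X]) :
    firstVarEquiv K n (polyImage n p) = MvPolynomial.C p := by
  have hX : firstVarEquiv K n (MvPolynomial.X 0) = MvPolynomial.C X := by
    simp [firstVarEquiv]
  have h : (firstVarEquiv K n).toAlgHom.comp
      (aeval (MvPolynomial.X 0)) = IsScalarTower.toAlgHom K K[X] (MvPolynomial (Fin n) K[X]) :=
    Polynomial.algHom_ext (by simpa using hX)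
  exact DFunLike.congr_fun h p

/-- let `F ∈ A^{l×l}` with `det F = p^t` (`p ∈ K[x₁]` irreducible, `t ≥ 1`)
and Smith form `diag(p^{s₁}, …, p^{s_l})`, `s₁ ≤ ⋯ ≤ s_l` (i.e.
`d_i(F) = p^{s₁ + ⋯ + s_i}` up to associates for every `i`).  Then
`F ∼ diag(p^{s₁}, …, p^{s_l})` iff `J_i(F) = A` for `i = 1, …, l`. -/
theorem stmt9 {K : Type*} [Field K] {n l : ℕ} (p : Polynomial K) (hp : Irreducible p)
    (t : ℕ) (ht : 0 < t)
    (F : Matrix (Fin l) (Fin l) (MvPolynomial (Fin (n + 1)) K))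
    (hdet : F.det = polyImage n p ^ t)
    (s : Fin l → ℕ) (hs : Monotone s)
    (hSmith : ∀ i : Fin l,
      IsGcdOf (polyImage n p ^ (∑ j ∈ Finset.Iic i, s j)) (minorsSet ((i : ℕ) + 1) F)) :
    MatrixEquiv F (Matrix.diagonal (fun i : Fin l => polyImage n p ^ s i)) ↔
      ∀ i : ℕ, 1 ≤ i → i ≤ l → ReducedMinorsUnitIdeal i F := by
  have hgcd : ∀ i, i + 1 ≤ l → IsGcdOf (polyImage n p ^ initialSum s (i + 1))
      (minorsSet (i + 1) F) := fun i hi => by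
    simpa only [sum_Iic_eq_initialSum] using hSmith ⟨i, hi⟩
  constructor
  · intro h i hi hil
    obtain ⟨i, rfl⟩ := Nat.exists_eq_add_of_le' hi
    have hp0 : polyImage n p ≠ 0 := fun h0 => hp.ne_zero <| by
      rw [← MvPolynomial.C_eq_zero (σ := Fin n), ← firstVarEquiv_polyImage, h0, map_zero]
    refine ⟨_, hgcd i hil, ?_⟩
    have hmem := pow_initialSum_mem_span_minorsSet_diagonal (polyImage n p) s hil
    rw [← h.span_minorsSet_eq, span_eq_span_singleton_mul_of_forall_dvd (hgcd i hil).1,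
      Ideal.mem_span_singleton_mul] at hmem
    obtain ⟨z, hz, hz'⟩ := hmem
    rw [mul_eq_left₀ (pow_ne_zero _ hp0)] at hz'
    exact (Ideal.eq_top_iff_one _).2 (hz' ▸ hz)
  · intro h
    have hF : HasDiagonalMinors (polyImage n p) s F := by
      rintro (_ | i) hi
      · simp [span_minorsSet_zero, initialSum]
      · obtain ⟨d, hd, hd'⟩ := h (i + 1) (Nat.succ_pos i) hi
        exact span_eq_of_isGcdOf hd (hgcd i hi) hd'
    refine hF.matrixEquiv_of_ringEquiv (firstVarEquiv K n).toRingEquiv fun h' => ?_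
    have he : (firstVarEquiv K n).toRingEquiv (polyImage n p) = MvPolynomial.C p :=
      firstVarEquiv_polyImage n p
    rw [he] at h' ⊢
    exact h'.matrixEquiv_diagonal n hp.ne_zero hs
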